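/- (Interior smoothness and derivative estimates for s-harmonic functions.) Let n ≥ 1 and s ∈ (0,1). For every multi-index β there exists a constant C > 0 depending only on n, s and β such that the following holds: for every r > 0 and every bounded continuous function u : ℝⁿ → ℝ that is s-harmonic at every point of the ball B_r, the restriction of u to B_{r/2} is infinitely differentiable, and sup_{x ∈ B_{r/2}} |D^β u(x)| ≤ C r^{−|β|} sup_{y ∈ ℝⁿ ∖ B_r} |u(y)|. -/

import Mathlib

/-!
Write `(-Δ)^s` as an integral of second differences and apply it to a radial bump `φ`. The result
`A` is radial, has mean zero and decays like `|x|^(-n-2s)`; its radial average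
`ρ(x) = ∫₀¹ t^(n-1) A(t x) dt` is smooth, integrable and satisfies
`l ∂_l (l^n ρ(l x)) = l^n A(l x)`. Since `A(l ·)` is a multiple of `(-Δ)^s (φ(l ·))`, the means of
an `s`-harmonic function `u` against `l^n ρ(l ·)` do not depend on `l`, as long as `φ(l ·)` is
supported where `u` is `s`-harmonic. Letting `l → ∞` gives a mean value formula with smooth kernel,
hence `u = (∫ ρ)⁻¹ u ⋆ ρ` locally, up to scaling. All derivatives fall on `ρ`, and the supremum of
`|u|` is controlled from outside the ball by the maximum principle.

Two points need care. Harmonicity is pointwise and the principal value limit is not uniform, so the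
weak formulation `∫ u (-Δ)^s φ = 0` is not a mere exchange of limits: it is obtained by comparison
with the sup-convolutions of `u` and of `-u`. And `∫ ρ > 0` holds because the bilinear energy of two
radially decreasing functions is positive, which makes `l ↦ ∫ φ l^n ρ(l ·)` increasing.
-/

open MeasureTheory Filter Metric Set
open scoped Topology

/-- The partial derivative of `f : ℝⁿ → ℝ` in the `i`-th coordinate direction. -/
noncomputable def partialDeriv (n : ℕ) (i : Fin n)
    (f : EuclideanSpace ℝ (Fin n) → ℝ) : EuclideanSpace ℝ (Fin n) → ℝ :=
  fun x => fderiv ℝ f x (EuclideanSpace.single i 1)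

/-- The multi-index derivative `D^β f = ∂₁^{β₁} ⋯ ∂ₙ^{βₙ} f`. -/
noncomputable def multiDeriv (n : ℕ) (β : Fin n → ℕ)
    (f : EuclideanSpace ℝ (Fin n) → ℝ) : EuclideanSpace ℝ (Fin n) → ℝ :=
  ((List.ofFn (fun i : Fin n => (partialDeriv n i)^[β i])).foldr (· ∘ ·) id) f

open scoped ContDiff
open Module (finrank finrank_pos)

section ParametricIntegral

variable {E G T : Type*} [NormedAddCommGroup E] [NormedSpace ℝ E]
  [NormedAddCommGroup G] [NormedSpace ℝ G] [MeasurableSpace T] {μ : Measure T} {F : E → T → G}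

theorem curryLeft_integral {k : ℕ} (f : T → E [×(k + 1)]→L[ℝ] G) :
    (∫ t, f t ∂μ).curryLeft = ∫ t, (f t).curryLeft ∂μ :=
  (ContinuousLinearEquiv.integral_comp_comm (𝕜 := ℝ) (F := E →L[ℝ] E [×k]→L[ℝ] G)
    (continuousMultilinearCurryLeftEquiv ℝ (fun _ : Fin (k + 1) ↦ E) G).toContinuousLinearEquiv
    f).symm

/-- An integrand `F x t` that is smooth in the parameter `x` and all of whose `x`-derivatives are
measurable in `t` and locally dominated by an integrable function of `t`, so that `∫ t, F x t ∂μ`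
can be differentiated under the integral sign to any order. -/
structure IsSmoothIntegrand (μ : Measure T) (F : E → T → G) : Prop where
  contDiff : ∀ t, ContDiff ℝ ∞ (F · t)
  aestronglyMeasurable : ∀ k x, AEStronglyMeasurable (fun t ↦ iteratedFDeriv ℝ k (F · t) x) μ
  locally_dominated : ∀ (k : ℕ) x, ∃ s ∈ 𝓝 x, ∃ b : T → ℝ, Integrable b μ ∧
    ∀ᵐ t ∂μ, ∀ y ∈ s, ‖iteratedFDeriv ℝ k (F · t) y‖ ≤ b t

namespace IsSmoothIntegrand

theorem integrable_iteratedFDeriv (h : IsSmoothIntegrand μ F) (k : ℕ) (x : E) :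
    Integrable (fun t ↦ iteratedFDeriv ℝ k (F · t) x) μ := by
  obtain ⟨s, hs, b, hb, hle⟩ := h.locally_dominated k x
  exact hb.mono' (h.aestronglyMeasurable k x) (hle.mono fun t ht ↦ ht x (mem_of_mem_nhds hs))

theorem hasFDerivAt_integral_iteratedFDeriv (h : IsSmoothIntegrand μ F) (k : ℕ) (x : E) :
    HasFDerivAt (fun y ↦ ∫ t, iteratedFDeriv ℝ k (F · t) y ∂μ)
      (∫ t, iteratedFDeriv ℝ (k + 1) (F · t) x ∂μ).curryLeft x := by
  obtain ⟨s, hs, b, hb, hle⟩ := h.locally_dominated (k + 1) x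
  rw [curryLeft_integral]
  refine hasFDerivAt_integral_of_dominated_of_fderiv_le hs
    (.of_forall fun y ↦ h.aestronglyMeasurable k y) (h.integrable_iteratedFDeriv k x)
    ?_ (hle.mono fun t ht y hy ↦ ?_) hb (.of_forall fun t y _ ↦
      (h.contDiff t).ftaylorSeries.fderiv k (mod_cast WithTop.coe_lt_top _) y)
  · exact (continuousMultilinearCurryLeftEquiv ℝ (fun _ : Fin (k + 1) ↦ E) G).continuous
      |>.comp_aestronglyMeasurable (h.aestronglyMeasurable (k + 1) x)
  · exact (ContinuousMultilinearMap.curryLeft_norm _).trans_le (ht y hy)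

theorem hasFTaylorSeriesUpTo_integral (h : IsSmoothIntegrand μ F) :
    HasFTaylorSeriesUpTo ∞ (fun x ↦ ∫ t, F x t ∂μ)
      (fun x k ↦ ∫ t, iteratedFDeriv ℝ k (F · t) x ∂μ) := by
  refine (hasFTaylorSeriesUpTo_top_iff' le_rfl).2
    ⟨fun x ↦ ?_, h.hasFDerivAt_integral_iteratedFDeriv⟩
  exact ((continuousMultilinearCurryFin0 ℝ E G).toContinuousLinearEquiv.integral_comp_comm _).symm

theorem contDiff_integral (h : IsSmoothIntegrand μ F) : ContDiff ℝ ∞ (fun x ↦ ∫ t, F x t ∂μ) :=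
  h.hasFTaylorSeriesUpTo_integral.contDiff

theorem iteratedFDeriv_integral (h : IsSmoothIntegrand μ F) (k : ℕ) (x : E) :
    iteratedFDeriv ℝ k (fun x ↦ ∫ t, F x t ∂μ) x = ∫ t, iteratedFDeriv ℝ k (F · t) x ∂μ :=
  (h.hasFTaylorSeriesUpTo_integral.eq_iteratedFDeriv (mod_cast le_top) x).symm

end IsSmoothIntegrand

end ParametricIntegral

section Decay

variable {E F : Type*} [NormedAddCommGroup E] [NormedAddCommGroup F] {α β : ℝ} {f : E → F}

/-- `f` decays at infinity at least as fast as `‖x‖ ^ (-α)` and is bounded by the same token; the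
weight `1 + ‖x‖` avoids the singularity at the origin. -/
def HasDecay (α : ℝ) (f : E → F) : Prop :=
  ∃ C, 0 ≤ C ∧ ∀ x, ‖f x‖ ≤ C * (1 + ‖x‖) ^ (-α)

theorem HasDecay.mono (hf : HasDecay α f) (h : β ≤ α) : HasDecay β f := by
  obtain ⟨C, hC, hle⟩ := hf
  refine ⟨C, hC, fun x ↦ (hle x).trans ?_⟩
  have : 1 ≤ 1 + ‖x‖ := by simp
  gcongr

theorem HasDecay.exists_norm_le (hf : HasDecay α f) (hα : 0 ≤ α) :
    ∃ C, ∀ x, ‖f x‖ ≤ C := by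
  obtain ⟨C, -, hle⟩ := hf.mono hα
  exact ⟨C, fun x ↦ (hle x).trans (by simp)⟩

theorem hasDecay_of_norm_le_rpow {B C R : ℝ} (hα : 0 ≤ α) (hR : 0 < R) (hB : ∀ x, ‖f x‖ ≤ B)
    (hC : ∀ x, R ≤ ‖x‖ → ‖f x‖ ≤ C * ‖x‖ ^ (-α)) : HasDecay α f := by
  have hB0 : 0 ≤ B := (norm_nonneg _).trans (hB 0)
  refine ⟨(B + |C| * R ^ (-α)) * (1 + R) ^ α, by positivity, fun x ↦ ?_⟩
  have hx : 0 < 1 + ‖x‖ := by positivity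
  obtain hlt | hge := lt_or_ge ‖x‖ R
  · calc ‖f x‖ ≤ B * (1 + R) ^ α * (1 + R) ^ (-α) := by
          rw [mul_assoc, ← Real.rpow_add (by positivity)]; simpa using hB x
      _ ≤ (B + |C| * R ^ (-α)) * (1 + R) ^ α * (1 + ‖x‖) ^ (-α) := by
          gcongr ?_ * _ * ?_
          · exact le_add_of_nonneg_right (by positivity)
          · exact Real.rpow_le_rpow_of_nonpos hx (by gcongr) (neg_nonpos.2 hα)
  · have hscale : R / (1 + R) * (1 + ‖x‖) ≤ ‖x‖ := by
      rw [div_mul_eq_mul_div, div_le_iff₀ (by positivity)]; linarith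
    calc ‖f x‖ ≤ |C| * ‖x‖ ^ (-α) :=
          (hC x hge).trans (by gcongr; exact le_abs_self C)
      _ ≤ |C| * (R / (1 + R) * (1 + ‖x‖)) ^ (-α) := by
          gcongr ?_ * ?_
          exact Real.rpow_le_rpow_of_nonpos (by positivity) hscale (neg_nonpos.2 hα)
      _ = |C| * R ^ (-α) * (1 + R) ^ α * (1 + ‖x‖) ^ (-α) := by
          rw [Real.mul_rpow (by positivity) hx.le, Real.div_rpow hR.le (by positivity),
            Real.rpow_neg (by positivity : 0 ≤ 1 + R), div_inv_eq_mul]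
          ring
      _ ≤ (B + |C| * R ^ (-α)) * (1 + R) ^ α * (1 + ‖x‖) ^ (-α) := by
          gcongr ?_ * _ * _
          exact le_add_of_nonneg_left hB0

theorem HasDecay.integrable [NormedSpace ℝ E] [FiniteDimensional ℝ E] [MeasurableSpace E]
    [BorelSpace E] {μ : Measure E} [μ.IsAddHaarMeasure] (hf : HasDecay α f)
    (hα : finrank ℝ E < α) (hfm : AEStronglyMeasurable f μ) : Integrable f μ := by
  obtain ⟨C, -, hC⟩ := hf
  exact ((integrable_one_add_norm hα).const_mul C).mono' hfm (.of_forall hC)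

/-- A smooth function all of whose derivatives, of order zero included, decay at the common
rate `α`. -/
structure HasSmoothDecay [NormedSpace ℝ E] [NormedSpace ℝ F] (α : ℝ) (f : E → F) : Prop where
  contDiff : ContDiff ℝ ∞ f
  hasDecay_iteratedFDeriv : ∀ k : ℕ, HasDecay α (iteratedFDeriv ℝ k f)

theorem HasSmoothDecay.hasDecay [NormedSpace ℝ E] [NormedSpace ℝ F] (hf : HasSmoothDecay α f) :
    HasDecay α f := by
  simpa only [HasDecay, norm_iteratedFDeriv_zero] using hf.hasDecay_iteratedFDeriv 0

theorem HasSmoothDecay.integrable [NormedSpace ℝ E] [NormedSpace ℝ F] [FiniteDimensional ℝ E]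
    [MeasurableSpace E] [BorelSpace E] {μ : Measure E} [μ.IsAddHaarMeasure]
    (hf : HasSmoothDecay α f) (hα : finrank ℝ E < α) : Integrable f μ :=
  hf.hasDecay.integrable hα hf.contDiff.continuous.aestronglyMeasurable

end Decay

section Convolution

open ContinuousLinearMap (lsmul)
open scoped Convolution

theorem one_add_norm_rpow_neg_le {E : Type*} [SeminormedAddCommGroup E] {α : ℝ} (hα : 0 ≤ α)
    {x y : E} (hxy : ‖x - y‖ ≤ 1) : (1 + ‖y‖) ^ (-α) ≤ 2 ^ α * (1 + ‖x‖) ^ (-α) := by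
  have hx : 1 + ‖x‖ ≤ 2 * (1 + ‖y‖) := by
    have := norm_sub_norm_le x y
    linarith [norm_nonneg y]
  calc (1 + ‖y‖) ^ (-α) = 2 ^ α * (2 * (1 + ‖y‖)) ^ (-α) := by
        rw [Real.mul_rpow two_pos.le (by positivity), ← mul_assoc, ← Real.rpow_add two_pos,
          add_neg_cancel, Real.rpow_zero, one_mul]
    _ ≤ 2 ^ α * (1 + ‖x‖) ^ (-α) := by
        gcongr ?_ * ?_
        exact Real.rpow_le_rpow_of_nonpos (by positivity) hx (neg_nonpos.2 hα)

variable {E F : Type*} [NormedAddCommGroup E] [NormedSpace ℝ E] [NormedAddCommGroup F]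
  [NormedSpace ℝ F] {f : E → F}

theorem iteratedFDeriv_smul_comp_sub (hf : ContDiff ℝ ∞ f) (c : ℝ) (k : ℕ) (x y : E) :
    iteratedFDeriv ℝ k (fun x ↦ c • f (x - y)) x = c • iteratedFDeriv ℝ k f (x - y) := by
  have hfy : ContDiff ℝ k (fun x ↦ f (x - y)) :=
    (hf.comp (contDiff_id.sub contDiff_const)).of_le (mod_cast le_top)
  rw [iteratedFDeriv_const_smul_apply' hfy.contDiffAt, iteratedFDeriv_comp_sub]

variable [FiniteDimensional ℝ E] [MeasurableSpace E] [BorelSpace E] {μ : Measure E} {α M : ℝ}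
  {u : E → ℝ}

namespace HasSmoothDecay

theorem isSmoothIntegrand_convolution [μ.IsAddHaarMeasure] (hf : HasSmoothDecay α f)
    (hα : finrank ℝ E < α) (hu : AEStronglyMeasurable u μ) (hM : ∀ x, |u x| ≤ M) :
    IsSmoothIntegrand μ (fun x y ↦ u y • f (x - y)) where
  contDiff y := contDiff_const.smul (hf.contDiff.comp (contDiff_id.sub contDiff_const))
  aestronglyMeasurable k x := by
    simp only [iteratedFDeriv_smul_comp_sub hf.contDiff]
    exact hu.smul ((hf.contDiff.continuous_iteratedFDeriv (mod_cast le_top)).comp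
      (continuous_const.sub continuous_id)).aestronglyMeasurable
  locally_dominated k x := by
    obtain ⟨C, hC, hle⟩ := hf.hasDecay_iteratedFDeriv k
    have hM0 : 0 ≤ M := (abs_nonneg _).trans (hM 0)
    have hα0 : 0 ≤ α := (Nat.cast_nonneg _).trans hα.le
    refine ⟨closedBall x 1, closedBall_mem_nhds x one_pos,
      fun y ↦ M * (C * (2 ^ α * (1 + ‖x - y‖) ^ (-α))),
      ((((integrable_one_add_norm hα).comp_sub_left x).const_mul _).const_mul _).const_mul _,
      .of_forall fun y z hz ↦ ?_⟩
    have hxz : ‖(x - y) - (z - y)‖ ≤ 1 := by simpa [dist_eq_norm, norm_sub_rev] using hz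
    rw [iteratedFDeriv_smul_comp_sub hf.contDiff, norm_smul]
    exact mul_le_mul (hM y) ((hle _).trans (by gcongr; exact one_add_norm_rpow_neg_le hα0 hxz))
      (norm_nonneg _) hM0

theorem contDiff_convolution [μ.IsAddHaarMeasure] (hf : HasSmoothDecay α f)
    (hα : finrank ℝ E < α) (hu : AEStronglyMeasurable u μ) (hM : ∀ x, |u x| ≤ M) :
    ContDiff ℝ ∞ (u ⋆[lsmul ℝ ℝ, μ] f : E → F) :=
  (hf.isSmoothIntegrand_convolution hα hu hM).contDiff_integral

theorem norm_iteratedFDeriv_convolution_le [μ.IsAddHaarMeasure] (hf : HasSmoothDecay α f)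
    (hα : finrank ℝ E < α) (hu : AEStronglyMeasurable u μ) (hM : ∀ x, |u x| ≤ M) (k : ℕ) (x : E) :
    ‖iteratedFDeriv ℝ k (u ⋆[lsmul ℝ ℝ, μ] f : E → F) x‖ ≤
      M * ∫ y, ‖iteratedFDeriv ℝ k f y‖ ∂μ := by
  have hint : Integrable (iteratedFDeriv ℝ k f) μ := (hf.hasDecay_iteratedFDeriv k).integrable hα
    (hf.contDiff.continuous_iteratedFDeriv (mod_cast le_top)).aestronglyMeasurable
  calc ‖iteratedFDeriv ℝ k (u ⋆[lsmul ℝ ℝ, μ] f : E → F) x‖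
      = ‖∫ y, u y • iteratedFDeriv ℝ k f (x - y) ∂μ‖ := by
        simp only [← iteratedFDeriv_smul_comp_sub hf.contDiff]
        exact congrArg norm
          ((hf.isSmoothIntegrand_convolution hα hu hM).iteratedFDeriv_integral k x)
    _ ≤ ∫ y, M * ‖iteratedFDeriv ℝ k f (x - y)‖ ∂μ := by
        refine norm_integral_le_of_norm_le ((hint.norm.comp_sub_left x).const_mul M)
          (.of_forall fun y ↦ ?_)
        rw [norm_smul]
        exact mul_le_mul_of_nonneg_right (hM y) (norm_nonneg _)
    _ = M * ∫ y, ‖iteratedFDeriv ℝ k f y‖ ∂μ := by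
        rw [integral_const_mul, integral_sub_left_eq_self (fun y ↦ ‖iteratedFDeriv ℝ k f y‖)]

end HasSmoothDecay

end Convolution

section RadialAverage

variable {E F : Type*} [NormedAddCommGroup E] [NormedSpace ℝ E] [NormedAddCommGroup F]
  [NormedSpace ℝ F] {α β : ℝ} {f : E → F}

/-- The weighted average `∫₀¹ t ^ j f(t x) dt` of `f` along the segment from the origin to `x`. For
`j = d - 1` it inverts the Euler operator `d + x · ∇`. -/
noncomputable def radialAverage (j : ℕ) (f : E → F) (x : E) : F :=
  ∫ t in (0 : ℝ)..1, t ^ j • f (t • x)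

theorem iteratedFDeriv_pow_smul_comp_smul (hf : ContDiff ℝ ∞ f) (j k : ℕ) (t : ℝ) (x : E) :
    iteratedFDeriv ℝ k (fun x ↦ t ^ j • f (t • x)) x =
      t ^ (j + k) • iteratedFDeriv ℝ k f (t • x) := by
  have hfk : ContDiff ℝ k f := hf.of_le (mod_cast le_top)
  have hft : ContDiff ℝ k (fun x ↦ f (t • x)) := hfk.comp (contDiff_const.smul contDiff_id)
  rw [iteratedFDeriv_const_smul_apply' hft.contDiffAt, iteratedFDeriv_comp_const_smul t hfk,
    smul_smul, pow_add]

theorem pow_smul_radialAverage_smul (j : ℕ) (f : E → F) (l : ℝ) (x : E) :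
    l ^ (j + 1) • radialAverage j f (l • x) = ∫ t in (0 : ℝ)..l, t ^ j • f (t • x) := by
  have h := intervalIntegral.smul_integral_comp_mul_right (a := 0) (b := 1)
    (fun t : ℝ ↦ t ^ j • f (t • x)) l
  rw [zero_mul, one_mul] at h
  rw [← h, radialAverage, pow_succ', mul_smul, ← intervalIntegral.integral_smul]
  simp only [mul_pow, smul_smul, mul_comm]

theorem norm_radialAverage_le {j : ℕ} {x : E} {b : ℝ → ℝ} (hb : IntervalIntegrable b volume 0 1)
    (h : ∀ t ∈ Ioc (0 : ℝ) 1, t ^ j * ‖f (t • x)‖ ≤ b t) :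
    ‖radialAverage j f x‖ ≤ ∫ t in (0 : ℝ)..1, b t := by
  refine intervalIntegral.norm_integral_le_of_norm_le zero_le_one (.of_forall fun t ht ↦ ?_) hb
  rw [norm_smul, norm_pow, Real.norm_of_nonneg ht.1.le]
  exact h t ht

theorem isSmoothIntegrand_radialAverage [FiniteDimensional ℝ E] (hf : ContDiff ℝ ∞ f) (j : ℕ) :
    IsSmoothIntegrand (volume.restrict (Ioc (0 : ℝ) 1)) (fun (x : E) t ↦ t ^ j • f (t • x)) where
  contDiff t := contDiff_const.smul (hf.comp (contDiff_const.smul contDiff_id))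
  aestronglyMeasurable k x := by
    simp only [iteratedFDeriv_pow_smul_comp_smul hf]
    have := hf.continuous_iteratedFDeriv (m := k) (mod_cast le_top)
    exact Continuous.aestronglyMeasurable (by fun_prop)
  locally_dominated k x := by
    obtain ⟨C, hC⟩ := ((isCompact_closedBall (0 : E) (‖x‖ + 1)).exists_bound_of_continuousOn
      (hf.continuous_iteratedFDeriv (m := k) (mod_cast le_top)).continuousOn)
    refine ⟨ball x 1, ball_mem_nhds x one_pos, fun _ ↦ C, integrable_const C, ?_⟩
    filter_upwards [ae_restrict_mem measurableSet_Ioc] with t ht y hy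
    have hty : t • y ∈ closedBall (0 : E) (‖x‖ + 1) := by
      have : ‖y‖ ≤ ‖x‖ + 1 := by
        have := norm_le_norm_add_norm_sub' y x
        linarith [(mem_ball_iff_norm.1 hy)]
      rw [mem_closedBall_zero_iff, norm_smul, Real.norm_of_nonneg ht.1.le]
      exact (mul_le_of_le_one_left (norm_nonneg y) ht.2).trans this
    rw [iteratedFDeriv_pow_smul_comp_smul hf, norm_smul, norm_pow, Real.norm_of_nonneg ht.1.le]
    exact (mul_le_of_le_one_left (norm_nonneg _) (pow_le_one₀ ht.1.le ht.2)).trans (hC _ hty)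

theorem contDiff_radialAverage [FiniteDimensional ℝ E] (hf : ContDiff ℝ ∞ f) (j : ℕ) :
    ContDiff ℝ ∞ (radialAverage j f) := by
  unfold radialAverage
  simpa only [intervalIntegral.integral_of_le zero_le_one] using
    (isSmoothIntegrand_radialAverage hf j).contDiff_integral

theorem iteratedFDeriv_radialAverage [FiniteDimensional ℝ E] (hf : ContDiff ℝ ∞ f) (j k : ℕ) :
    iteratedFDeriv ℝ k (radialAverage j f) = radialAverage (j + k) (iteratedFDeriv ℝ k f) := by
  ext1 x
  have h := (isSmoothIntegrand_radialAverage hf j).iteratedFDeriv_integral k x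
  unfold radialAverage
  simpa only [intervalIntegral.integral_of_le zero_le_one,
    iteratedFDeriv_pow_smul_comp_smul hf] using h

theorem HasDecay.radialAverage {j : ℕ} (hf : HasDecay α f) (hβ : 0 ≤ β) (hβα : β ≤ α)
    (hβj : β < j + 1) : HasDecay β (radialAverage j f) := by
  obtain ⟨B, hB⟩ := hf.exists_norm_le (hβ.trans hβα)
  obtain ⟨C, hC, hle⟩ := hf.mono hβα
  have hint : IntervalIntegrable (fun t : ℝ ↦ t ^ (j - β)) volume 0 1 :=
    intervalIntegral.intervalIntegrable_rpow' (by linarith)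
  refine hasDecay_of_norm_le_rpow hβ one_pos (B := B) (fun x ↦ ?_)
    (C := C * ∫ t in (0 : ℝ)..1, t ^ (j - β)) fun x hx ↦ ?_
  · have hB' : ∀ t ∈ Ioc (0 : ℝ) 1, t ^ j * ‖f (t • x)‖ ≤ B := fun t ht ↦
      (mul_le_of_le_one_left (norm_nonneg _) (pow_le_one₀ ht.1.le ht.2)).trans (hB _)
    simpa using norm_radialAverage_le intervalIntegrable_const hB'
  · have hx0 : 0 < ‖x‖ := one_pos.trans_le hx
    rw [mul_right_comm, ← intervalIntegral.integral_const_mul]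
    refine norm_radialAverage_le (hint.const_mul _) fun t ht ↦ ?_
    have hnorm : ‖t • x‖ = t * ‖x‖ := by rw [norm_smul, Real.norm_of_nonneg ht.1.le]
    calc t ^ j * ‖f (t • x)‖ ≤ t ^ j * (C * (t * ‖x‖) ^ (-β)) := by
          refine mul_le_mul_of_nonneg_left ((hle _).trans ?_) (pow_nonneg ht.1.le j)
          gcongr ?_ * ?_
          refine Real.rpow_le_rpow_of_nonpos (mul_pos ht.1 hx0) ?_ (neg_nonpos.2 hβ)
          linarith
      _ = C * ‖x‖ ^ (-β) * t ^ (j - β) := by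
          rw [Real.mul_rpow ht.1.le hx0.le, sub_eq_add_neg, Real.rpow_add ht.1, Real.rpow_natCast]
          ring

section Cancellation

variable [FiniteDimensional ℝ E] [MeasurableSpace E] [BorelSpace E] {μ : Measure E}
  [μ.IsAddHaarMeasure]

theorem integral_Ioi_pow_smul_comp_smul_eq_zero [Nontrivial E]
    (hrad : ∀ x y, ‖x‖ = ‖y‖ → f x = f y) (hf0 : ∫ x, f x ∂μ = 0) (x : E) :
    ∫ t in Ioi (0 : ℝ), t ^ (finrank ℝ E - 1) • f (t • x) = 0 := by
  have hpolar : ∫ y, f (‖y‖ • x) ∂μ = 0 := by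
    have hswap : ∀ y : E, f (‖y‖ • x) = f (‖x‖ • y) := fun y ↦
      hrad _ _ (by simp only [norm_smul, norm_norm, mul_comm])
    simp only [hswap, Measure.integral_comp_smul, hf0, smul_zero]
  rw [integral_fun_norm_addHaar μ fun t ↦ f (t • x)] at hpolar
  have hball : μ.real (ball (0 : E) 1) ≠ 0 :=
    (ENNReal.toReal_pos (measure_ball_pos μ 0 one_pos).ne' measure_ball_lt_top.ne).ne'
  have hd : (finrank ℝ E : ℝ) ≠ 0 := Nat.cast_ne_zero.2 finrank_pos.ne'
  simpa only [← Nat.cast_smul_eq_nsmul ℝ, smul_eq_zero, hd, hball, false_or] using hpolar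

theorem radialAverage_eq_neg_integral_Ioi [Nontrivial E] (hfc : Continuous f)
    (hrad : ∀ x y, ‖x‖ = ‖y‖ → f x = f y) (hf0 : ∫ x, f x ∂μ = 0) {x : E}
    (hint : IntegrableOn (fun t : ℝ ↦ t ^ (finrank ℝ E - 1) • f (t • x)) (Ioi 1)) :
    radialAverage (finrank ℝ E - 1) f x =
      -∫ t in Ioi (1 : ℝ), t ^ (finrank ℝ E - 1) • f (t • x) := by
  have hcont : Continuous fun t : ℝ ↦ t ^ (finrank ℝ E - 1) • f (t • x) := by fun_prop
  rw [radialAverage, intervalIntegral.integral_of_le zero_le_one, eq_neg_iff_add_eq_zero,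
    ← setIntegral_union (Ioc_disjoint_Ioi le_rfl) measurableSet_Ioi hcont.integrableOn_Ioc hint,
    Ioc_union_Ioi_eq_Ioi zero_le_one]
  exact integral_Ioi_pow_smul_comp_smul_eq_zero hrad hf0 x

theorem hasDecay_radialAverage_of_integral_eq_zero [Nontrivial E] (hf : HasDecay α f)
    (hfc : Continuous f) (hα : finrank ℝ E < α) (hrad : ∀ x y, ‖x‖ = ‖y‖ → f x = f y)
    (hf0 : ∫ x, f x ∂μ = 0) : HasDecay α (radialAverage (finrank ℝ E - 1) f) := by
  have hα0 : 0 ≤ α := (Nat.cast_nonneg _).trans hα.le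
  obtain ⟨B, hB⟩ := (hf.radialAverage (j := finrank ℝ E - 1) le_rfl hα0
    (by positivity)).exists_norm_le le_rfl
  obtain ⟨C, hC, hle⟩ := hf
  refine hasDecay_of_norm_le_rpow hα0 one_pos hB
    (C := C * ∫ t in Ioi (1 : ℝ), t ^ ((finrank ℝ E : ℝ) - 1 - α)) fun x hx ↦ ?_
  have hx0 : 0 < ‖x‖ := one_pos.trans_le hx
  have hbound : ∀ t ∈ Ioi (1 : ℝ), ‖t ^ (finrank ℝ E - 1) • f (t • x)‖ ≤
      C * ‖x‖ ^ (-α) * t ^ ((finrank ℝ E : ℝ) - 1 - α) := fun t ht ↦ by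
    have ht0 : 0 < t := one_pos.trans ht
    have hpow : t ^ ((finrank ℝ E : ℝ) - 1) = t ^ (finrank ℝ E - 1) := by
      rw [← Real.rpow_natCast, Nat.cast_pred finrank_pos]
    calc ‖t ^ (finrank ℝ E - 1) • f (t • x)‖
        ≤ t ^ (finrank ℝ E - 1) * (C * (t * ‖x‖) ^ (-α)) := by
          rw [norm_smul, norm_pow, Real.norm_of_nonneg ht0.le]
          refine mul_le_mul_of_nonneg_left ((hle _).trans ?_) (pow_nonneg ht0.le _)
          gcongr ?_ * ?_
          refine Real.rpow_le_rpow_of_nonpos (mul_pos ht0 hx0) ?_ (neg_nonpos.2 hα0)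
          rw [norm_smul, Real.norm_of_nonneg ht0.le]
          linarith
      _ = C * ‖x‖ ^ (-α) * t ^ ((finrank ℝ E : ℝ) - 1 - α) := by
          rw [Real.mul_rpow ht0.le hx0.le, sub_eq_add_neg _ α, Real.rpow_add ht0, hpow]
          ring
  have hint : IntegrableOn (fun t : ℝ ↦ C * ‖x‖ ^ (-α) * t ^ ((finrank ℝ E : ℝ) - 1 - α))
      (Ioi 1) := (integrableOn_Ioi_rpow_of_lt (by linarith) one_pos).const_mul _
  have hcont : Continuous fun t : ℝ ↦ t ^ (finrank ℝ E - 1) • f (t • x) := by fun_prop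
  rw [radialAverage_eq_neg_integral_Ioi hfc hrad hf0 (Integrable.mono' hint
    hcont.aestronglyMeasurable ((ae_restrict_mem measurableSet_Ioi).mono hbound)),
    norm_neg, mul_right_comm, ← integral_const_mul]
  exact norm_integral_le_of_norm_le hint ((ae_restrict_mem measurableSet_Ioi).mono hbound)

theorem HasSmoothDecay.radialAverage_of_integral_eq_zero [Nontrivial E] (hf : HasSmoothDecay α f)
    (hα : finrank ℝ E < α) (hrad : ∀ x y, ‖x‖ = ‖y‖ → f x = f y) (hf0 : ∫ x, f x ∂μ = 0)
    (hβ : 0 ≤ β) (hβα : β ≤ α) (hβd : β < finrank ℝ E + 1) :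
    HasSmoothDecay β (radialAverage (finrank ℝ E - 1) f) where
  contDiff := contDiff_radialAverage hf.contDiff _
  hasDecay_iteratedFDeriv k := by
    cases k with
    | zero =>
      simpa only [HasDecay, norm_iteratedFDeriv_zero] using
        (hasDecay_radialAverage_of_integral_eq_zero hf.hasDecay hf.contDiff.continuous hα hrad
          hf0).mono hβα
    | succ k =>
      rw [iteratedFDeriv_radialAverage hf.contDiff]
      refine (hf.hasDecay_iteratedFDeriv (k + 1)).radialAverage hβ hβα ?_
      rw [Nat.cast_add, Nat.cast_pred finrank_pos]
      push_cast
      linarith [(Nat.cast_nonneg k : (0 : ℝ) ≤ k)]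

end Cancellation

end RadialAverage

section DilationMean

variable {E : Type*} [NormedAddCommGroup E] [NormedSpace ℝ E] [MeasureSpace E] {v f A : E → ℝ}
  {M l l₁ l₂ : ℝ}

/-- The integral of `v` against the `L¹`-normalised dilation `l ^ d f(l ·)` of the profile `f`. As
`l → ∞` it localises at the origin. -/
noncomputable def dilationMean (v f : E → ℝ) (l : ℝ) : ℝ :=
  l ^ finrank ℝ E * ∫ y, v y * f (l • y)

variable [FiniteDimensional ℝ E]

theorem tendsto_dilationMean_nhds_zero [Nontrivial E] (hv : Integrable v) (hM : ∀ x, |f x| ≤ M) :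
    Tendsto (dilationMean v f) (𝓝 0) (𝓝 0) := by
  have hbound : ∀ l : ℝ, ‖∫ y, v y * f (l • y)‖ ≤ ∫ y, ‖v y‖ * M := fun l ↦
    norm_integral_le_of_norm_le (hv.norm.mul_const M) (.of_forall fun y ↦ by
      rw [norm_mul]; exact mul_le_mul_of_nonneg_left (hM _) (norm_nonneg _))
  have hpow : Tendsto (fun l : ℝ ↦ l ^ finrank ℝ E) (𝓝 0) (𝓝 0) := by
    simpa [(finrank_pos (R := ℝ) (M := E)).ne'] using (continuous_pow (finrank ℝ E)).tendsto (0 : ℝ)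
  exact bdd_le_mul_tendsto_zero' _ (.of_forall hbound) hpow |>.congr fun l ↦ mul_comm _ _

theorem integral_mul_pow_mul_comp_smul [Nontrivial E] (hl : 0 < l) :
    ∫ y, v y * (l ^ (finrank ℝ E - 1) * A (l • y)) = l⁻¹ * dilationMean v A l := by
  rw [dilationMean, ← pow_sub_one_mul (finrank_pos (R := ℝ) (M := E)).ne' l, mul_comm _ l,
    mul_assoc, inv_mul_cancel_left₀ hl.ne', ← integral_const_mul]
  simp only [mul_left_comm]

variable [BorelSpace E] [(volume : Measure E).IsAddHaarMeasure]

theorem dilationMean_eq_integral (hl : 0 < l) :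
    dilationMean v f l = ∫ y, v (l⁻¹ • y) * f y := by
  have h := Measure.integral_comp_smul volume (fun y : E ↦ v (l⁻¹ • y) * f y) l
  simp only [smul_smul, inv_mul_cancel₀ hl.ne', one_smul] at h
  rw [dilationMean, h, abs_of_pos (by positivity), smul_eq_mul,
    mul_inv_cancel_left₀ (by positivity)]

theorem tendsto_dilationMean_atTop (hv : Continuous v) (hM : ∀ x, |v x| ≤ M)
    (hf : Integrable f) : Tendsto (dilationMean v f) atTop (𝓝 (v 0 * ∫ y, f y)) := by
  rw [← integral_const_mul]
  refine Tendsto.congr' ((eventually_gt_atTop 0).mono fun l hl ↦ (dilationMean_eq_integral hl).symm)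
    (tendsto_integral_filter_of_dominated_convergence (fun y ↦ M * ‖f y‖)
      (.of_forall fun l ↦ ?_) (.of_forall fun l ↦ .of_forall fun y ↦ ?_) (hf.norm.const_mul M)
      (.of_forall fun y ↦ ?_))
  · exact Continuous.aestronglyMeasurable (by fun_prop) |>.mul hf.aestronglyMeasurable
  · rw [norm_mul]
    exact mul_le_mul_of_nonneg_right (hM _) (norm_nonneg _)
  · have hzero : Tendsto (fun l : ℝ ↦ l⁻¹ • y) atTop (𝓝 0) := by
      simpa using (tendsto_inv_atTop_zero (𝕜 := ℝ)).smul_const y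
    exact ((hv.tendsto 0).comp hzero).mul_const _

theorem integrable_pow_mul_comp_smul [Nontrivial E] (hA : Continuous A) (hAi : Integrable A)
    (hl₁ : 0 < l₁) :
    Integrable (fun p : E × ℝ ↦ p.2 ^ (finrank ℝ E - 1) * A (p.2 • p.1))
      (volume.prod (volume.restrict (Ioc l₁ l₂))) := by
  rw [integrable_prod_iff' (Continuous.aestronglyMeasurable (by fun_prop))]
  have hpos : ∀ᵐ l ∂volume.restrict (Ioc l₁ l₂), 0 < l :=
    (ae_restrict_mem measurableSet_Ioc).mono fun l hl ↦ hl₁.trans hl.1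
  refine ⟨hpos.mono fun l hl ↦ (hAi.comp_smul hl.ne').const_mul (l ^ (finrank ℝ E - 1)), ?_⟩
  have hinv : IntegrableOn (fun l : ℝ ↦ l⁻¹ * ∫ y, ‖A y‖) (Ioc l₁ l₂) :=
    ((continuousOn_inv₀.mono fun l hl ↦ (hl₁.trans_le hl.1).ne').integrableOn_Icc.mono_set
      Ioc_subset_Icc_self).mul_const _
  refine hinv.congr (hpos.mono fun l hl ↦ ?_)
  have hpow : l⁻¹ = l ^ (finrank ℝ E - 1) * (l ^ finrank ℝ E)⁻¹ := by
    rw [← pow_sub_one_mul finrank_pos.ne' l]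
    field_simp
  simp only [norm_mul, norm_pow, Real.norm_of_nonneg hl.le]
  rw [integral_const_mul, Measure.integral_comp_smul volume (fun y ↦ ‖A y‖),
    abs_of_pos (by positivity), smul_eq_mul, ← mul_assoc, hpow]

theorem integrable_mul_pow_mul_comp_smul [Nontrivial E] (hA : Continuous A) (hAi : Integrable A)
    (hv : AEStronglyMeasurable v) (hM : ∀ x, |v x| ≤ M) (hl₁ : 0 < l₁) :
    Integrable (fun p : E × ℝ ↦ v p.1 * (p.2 ^ (finrank ℝ E - 1) * A (p.2 • p.1)))
      (volume.prod (volume.restrict (Ioc l₁ l₂))) :=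
  (integrable_pow_mul_comp_smul hA hAi hl₁).bdd_mul hv.comp_fst (.of_forall fun p ↦ hM p.1)

theorem intervalIntegrable_inv_mul_dilationMean [Nontrivial E] (hA : Continuous A)
    (hAi : Integrable A) (hv : AEStronglyMeasurable v) (hM : ∀ x, |v x| ≤ M) (hl₁ : 0 < l₁)
    (hl : l₁ ≤ l₂) : IntervalIntegrable (fun l ↦ l⁻¹ * dilationMean v A l) volume l₁ l₂ := by
  rw [intervalIntegrable_iff_integrableOn_Ioc_of_le hl]
  refine (integrable_mul_pow_mul_comp_smul hA hAi hv hM hl₁).integral_prod_right.congr ?_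
  filter_upwards [ae_restrict_mem measurableSet_Ioc] with l hl
  exact integral_mul_pow_mul_comp_smul (hl₁.trans hl.1)

theorem dilationMean_radialAverage_sub [Nontrivial E] (hA : Continuous A) (hAi : Integrable A)
    (hRi : Integrable (radialAverage (finrank ℝ E - 1) A)) (hv : AEStronglyMeasurable v)
    (hM : ∀ x, |v x| ≤ M) (hl₁ : 0 < l₁) (hl : l₁ ≤ l₂) :
    dilationMean v (radialAverage (finrank ℝ E - 1) A) l₂ -
        dilationMean v (radialAverage (finrank ℝ E - 1) A) l₁ =
      ∫ l in l₁..l₂, l⁻¹ * dilationMean v A l := by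
  have hd : finrank ℝ E - 1 + 1 = finrank ℝ E := Nat.sub_add_cancel finrank_pos
  have hprim : ∀ l y, l ^ finrank ℝ E * radialAverage (finrank ℝ E - 1) A (l • y) =
      ∫ t in (0 : ℝ)..l, t ^ (finrank ℝ E - 1) * A (t • y) := fun l y ↦ by
    simpa only [hd, smul_eq_mul] using pow_smul_radialAverage_smul (finrank ℝ E - 1) A l y
  have hint : ∀ l, 0 < l → Integrable fun y ↦
      v y * ∫ t in (0 : ℝ)..l, t ^ (finrank ℝ E - 1) * A (t • y) := fun l hl ↦ by
    simp only [← hprim]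
    exact ((hRi.comp_smul hl.ne').const_mul _).bdd_mul hv (.of_forall hM)
  have hmean : ∀ l, dilationMean v (radialAverage (finrank ℝ E - 1) A) l =
      ∫ y, v y * ∫ t in (0 : ℝ)..l, t ^ (finrank ℝ E - 1) * A (t • y) := fun l ↦ by
    simp only [dilationMean, ← hprim, ← integral_const_mul, mul_left_comm]
  calc _ = ∫ y, ∫ t in Ioc l₁ l₂, v y * (t ^ (finrank ℝ E - 1) * A (t • y)) := by
        rw [hmean, hmean, ← integral_sub (hint l₂ (hl₁.trans_le hl)) (hint l₁ hl₁)]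
        congr 1 with y
        have hcont : Continuous fun t : ℝ ↦ t ^ (finrank ℝ E - 1) * A (t • y) := by fun_prop
        rw [← mul_sub, intervalIntegral.integral_interval_sub_left
          (hcont.intervalIntegrable _ _) (hcont.intervalIntegrable _ _),
          intervalIntegral.integral_of_le hl, integral_const_mul]
    _ = ∫ t in Ioc l₁ l₂, ∫ y, v y * (t ^ (finrank ℝ E - 1) * A (t • y)) :=
        integral_integral_swap (integrable_mul_pow_mul_comp_smul hA hAi hv hM hl₁)
    _ = ∫ t in l₁..l₂, t⁻¹ * dilationMean v A t := by
        rw [intervalIntegral.integral_of_le hl]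
        exact setIntegral_congr_fun measurableSet_Ioc fun t ht ↦
          integral_mul_pow_mul_comp_smul (hl₁.trans ht.1)

end DilationMean

section SecondDiff

variable {E F : Type*} [NormedAddCommGroup E] [NormedAddCommGroup F] [NormedSpace ℝ F]
  {f : E → F} {M : ℝ}

/-- The symmetric second difference of `f` at `x`, with the sign making it nonnegative at a
maximum. -/
def secondDiff (f : E → F) (x z : E) : F := (2 : ℝ) • f x - f (x + z) - f (x - z)

theorem secondDiff_eq_add (f : E → F) (x z : E) :
    secondDiff f x z = (f x - f (x + z)) + (f x - f (x + -z)) := by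
  rw [secondDiff, two_smul, ← sub_eq_add_neg]
  abel

theorem continuous_secondDiff (hf : Continuous f) :
    Continuous fun p : E × E ↦ secondDiff f p.1 p.2 := by
  unfold secondDiff
  fun_prop

theorem continuous_secondDiff_right (hf : Continuous f) (x : E) : Continuous (secondDiff f x) :=
  (continuous_secondDiff hf).comp (Continuous.prodMk_right x)

theorem norm_secondDiff_le_add (f : E → F) (x z : E) :
    ‖secondDiff f x z‖ ≤ 2 * ‖f x‖ + ‖f (x + z)‖ + ‖f (x - z)‖ := by
  calc _ ≤ ‖(2 : ℝ) • f x‖ + ‖f (x + z)‖ + ‖f (x - z)‖ :=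
        norm_sub_le_of_le (norm_sub_le _ _) le_rfl
    _ = _ := by rw [norm_smul, Real.norm_two]

theorem norm_secondDiff_le (hM : ∀ x, ‖f x‖ ≤ M) (x z : E) : ‖secondDiff f x z‖ ≤ 4 * M := by
  linarith [norm_secondDiff_le_add f x z, hM x, hM (x + z), hM (x - z)]

variable [NormedSpace ℝ E]

theorem norm_secondDiff_le_of_lipschitzWith_fderiv {L : NNReal} (hf : Differentiable ℝ f)
    (hL : LipschitzWith L (fderiv ℝ f)) (x z : E) : ‖secondDiff f x z‖ ≤ 2 * L * ‖z‖ ^ 2 := by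
  have htaylor (z : E) : ‖f (x + z) - f x - fderiv ℝ f x z‖ ≤ L * ‖z‖ ^ 2 := by
    have h := (convex_closedBall x ‖z‖).norm_image_sub_le_of_norm_hasFDerivWithin_le'
      (x := x) (y := x + z) (fun y _ ↦ (hf y).hasFDerivAt.hasFDerivWithinAt)
      (fun y hy ↦ (hL.norm_sub_le y x).trans <|
        mul_le_mul_of_nonneg_left (mem_closedBall_iff_norm.1 hy) L.2) (by simp) (by simp)
    rwa [add_sub_cancel_left, mul_assoc, ← sq] at h
  have hsplit : secondDiff f x z = -(f (x + z) - f x - fderiv ℝ f x z) -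
      (f (x + -z) - f x - fderiv ℝ f x (-z)) := by
    rw [secondDiff_eq_add, map_neg]
    abel
  calc ‖secondDiff f x z‖ ≤ L * ‖z‖ ^ 2 + L * ‖-z‖ ^ 2 := by
        rw [hsplit]
        exact norm_sub_le_of_le ((norm_neg _).trans_le (htaylor z)) (htaylor (-z))
    _ = 2 * L * ‖z‖ ^ 2 := by rw [norm_neg]; ring

theorem exists_norm_secondDiff_le_min (hf : ContDiff ℝ 2 f) (hfc : HasCompactSupport f) :
    ∃ C, 0 ≤ C ∧ ∀ x z, ‖secondDiff f x z‖ ≤ C * min 1 (‖z‖ ^ 2) := by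
  obtain ⟨L, hL⟩ := ContDiff.lipschitzWith_of_hasCompactSupport (hfc.fderiv (𝕜 := ℝ))
    (hf.fderiv_right (m := 1) (by norm_num)) one_ne_zero
  obtain ⟨M, hM⟩ := hfc.exists_bound_of_continuous hf.continuous
  have hM0 : 0 ≤ M := (norm_nonneg _).trans (hM 0)
  refine ⟨max (4 * M) (2 * L), by positivity, fun x z ↦ ?_⟩
  rw [mul_min_of_nonneg _ _ (by positivity), mul_one]
  refine le_min ((norm_secondDiff_le hM x z).trans (le_max_left _ _)) ?_
  exact (norm_secondDiff_le_of_lipschitzWith_fderiv (hf.differentiable two_ne_zero) hL x z).trans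
    (by gcongr; exact le_max_right _ _)

theorem contDiff_secondDiff_left {n : ℕ∞} (hf : ContDiff ℝ n f) (z : E) :
    ContDiff ℝ n fun x ↦ secondDiff f x z := by
  unfold secondDiff
  fun_prop

theorem iteratedFDeriv_secondDiff (hf : ContDiff ℝ ∞ f) (k : ℕ) (x z : E) :
    iteratedFDeriv ℝ k (fun y ↦ secondDiff f y z) x =
      secondDiff (iteratedFDeriv ℝ k f) x z := by
  have hk : ContDiff ℝ k f := hf.of_le (mod_cast le_top)
  have h0 : ContDiff ℝ k fun y ↦ (2 : ℝ) • f y := by fun_prop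
  have h1 : ContDiff ℝ k fun y ↦ f (y + z) := by fun_prop
  have h2 : ContDiff ℝ k fun y ↦ f (y - z) := by fun_prop
  have hsub := iteratedFDeriv_sub_apply (x := x) (h0.sub h1).contDiffAt h2.contDiffAt
  have hsub' := iteratedFDeriv_sub_apply (x := x) h0.contDiffAt h1.contDiffAt
  simp only [Pi.sub_def] at hsub hsub'
  simp only [secondDiff]
  rw [hsub, hsub', iteratedFDeriv_comp_add_right, iteratedFDeriv_comp_sub,
    iteratedFDeriv_const_smul_apply' hk.contDiffAt]

theorem iteratedFDeriv_const_smul_secondDiff (hf : ContDiff ℝ ∞ f) (c : ℝ) (k : ℕ) (x z : E) :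
    iteratedFDeriv ℝ k (fun y ↦ c • secondDiff f y z) x =
      c • secondDiff (iteratedFDeriv ℝ k f) x z := by
  rw [iteratedFDeriv_const_smul_apply', iteratedFDeriv_secondDiff hf]
  exact (contDiff_secondDiff_left (hf.of_le (mod_cast le_top)) z).contDiffAt

end SecondDiff

section LevyOperator

variable {E F : Type*} [NormedAddCommGroup E] [NormedAddCommGroup F] [NormedSpace ℝ F]
  {κ : E → ℝ} {f : E → F} {ε : ℝ}

/-- The kernel `κ` cut off on the closed ball of radius `ε`. -/
noncomputable def truncKernel (ε : ℝ) (κ : E → ℝ) : E → ℝ := {z | ε < ‖z‖}.indicator κ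

theorem eventually_truncKernel_eq {z : E} (hz : z ≠ 0) :
    ∀ᶠ ε in 𝓝[>] 0, truncKernel ε κ z = κ z := by
  filter_upwards [mem_nhdsWithin_of_mem_nhds (Iio_mem_nhds (norm_pos_iff.2 hz))] with ε hε
  exact indicator_of_mem (s := {z | ε < ‖z‖}) hε κ

variable [MeasureSpace E]

/-- The density of a symmetric Lévy measure: the class of kernels for which
`∫ z, κ z • secondDiff f x z` converges for smooth bounded `f`. It contains both the kernel of the
fractional Laplacian and its truncations away from the origin. -/
structure IsLevyKernel (κ : E → ℝ) : Prop where
  measurable : Measurable κ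
  nonneg : ∀ z, 0 ≤ κ z
  even : ∀ z, κ (-z) = κ z
  integrable_mul_min : Integrable fun z ↦ κ z * min 1 (‖z‖ ^ 2)

/-- The nonlocal operator with kernel `κ`, in second-difference form so that no principal value is
needed. For `κ = ‖·‖ ^ (-(d + 2 * s))` it is a multiple of the fractional Laplacian. -/
noncomputable def levyOp (κ : E → ℝ) (f : E → F) (x : E) : F := ∫ z, κ z • secondDiff f x z

theorem integral_mul_levyOp [SFinite (volume : Measure E)] {V f : E → ℝ} {M : ℝ}
    (hV : AEStronglyMeasurable V) (hM : ∀ x, |V x| ≤ M)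
    (hκf : Integrable (fun p : E × E ↦ κ p.2 • secondDiff f p.1 p.2) (volume.prod volume)) :
    ∫ x, V x * levyOp κ f x = ∫ z, κ z * ∫ x, V x * secondDiff f x z := by
  have hswap := integral_integral_swap (f := fun x z ↦ V x * κ z • secondDiff f x z)
    (hκf.bdd_mul hV.comp_fst (.of_forall fun p ↦ hM p.1))
  simp only [levyOp, smul_eq_mul, ← integral_const_mul, mul_left_comm (κ _)] at hswap ⊢
  exact hswap

namespace IsLevyKernel

theorem norm_smul_eq (h : IsLevyKernel κ) (z : E) (y : F) : ‖κ z • y‖ = κ z * ‖y‖ := by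
  rw [norm_smul, Real.norm_of_nonneg (h.nonneg z)]

theorem truncKernel_nonneg (h : IsLevyKernel κ) (ε : ℝ) (z : E) : 0 ≤ truncKernel ε κ z :=
  indicator_nonneg (fun z _ ↦ h.nonneg z) z

theorem truncKernel_le (h : IsLevyKernel κ) (ε : ℝ) (z : E) : truncKernel ε κ z ≤ κ z :=
  indicator_le_self' (fun z _ ↦ h.nonneg z) z

variable [BorelSpace E]

protected theorem truncKernel (h : IsLevyKernel κ) (ε : ℝ) : IsLevyKernel (truncKernel ε κ) where
  measurable := h.measurable.indicator (measurableSet_lt measurable_const measurable_norm)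
  nonneg := h.truncKernel_nonneg ε
  even z := by simp only [truncKernel, indicator, mem_ofPred_eq, norm_neg, h.even]
  integrable_mul_min := by
    refine (h.integrable_mul_min.indicator (s := {z : E | ε < ‖z‖})
      (measurableSet_lt measurable_const measurable_norm)).congr (.of_forall fun z ↦ ?_)
    simp only [truncKernel, indicator_mul_left]

theorem integrable_truncKernel (h : IsLevyKernel κ) (hε : 0 < ε) :
    Integrable (truncKernel ε κ) := by
  have hc : 0 < min 1 (ε ^ 2) := by positivity
  refine ((h.truncKernel ε).integrable_mul_min.const_mul (min 1 (ε ^ 2))⁻¹).mono'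
    (h.truncKernel ε).measurable.aestronglyMeasurable (.of_forall fun z ↦ ?_)
  rw [Real.norm_of_nonneg ((h.truncKernel ε).nonneg z), le_inv_mul_iff₀' hc]
  by_cases hz : ε < ‖z‖
  · gcongr
    exact (h.truncKernel ε).nonneg z
  · simp [truncKernel, hz]

variable [NormedSpace ℝ E] [FiniteDimensional ℝ E]

theorem integrable_smul_secondDiff (h : IsLevyKernel κ) (hf : ContDiff ℝ 2 f)
    (hfc : HasCompactSupport f) (x : E) : Integrable fun z ↦ κ z • secondDiff f x z := by
  obtain ⟨C, -, hC⟩ := exists_norm_secondDiff_le_min hf hfc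
  refine (h.integrable_mul_min.const_mul C).mono' (h.measurable.aestronglyMeasurable.smul
    (continuous_secondDiff_right hf.continuous x).aestronglyMeasurable) (.of_forall fun z ↦ ?_)
  rw [h.norm_smul_eq, mul_left_comm]
  exact mul_le_mul_of_nonneg_left (hC x z) (h.nonneg z)

theorem isSmoothIntegrand_levyOp (h : IsLevyKernel κ) (hf : ContDiff ℝ ∞ f)
    (hfc : HasCompactSupport f) :
    IsSmoothIntegrand volume fun x z ↦ κ z • secondDiff f x z := by
  have hf₂ (k : ℕ) : ContDiff ℝ 2 (iteratedFDeriv ℝ k f) :=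
    mod_cast contDiff_infty.1 (hf.iteratedFDeriv_right (m := ∞) (i := k) le_rfl) 2
  refine ⟨fun z ↦ (contDiff_secondDiff_left hf z).const_smul _, fun k x ↦ ?_, fun k x ↦ ?_⟩
  · simpa only [iteratedFDeriv_const_smul_secondDiff hf] using
      (h.integrable_smul_secondDiff (hf₂ k) (hfc.iteratedFDeriv k) x).aestronglyMeasurable
  · obtain ⟨C, -, hC⟩ := exists_norm_secondDiff_le_min (hf₂ k) (hfc.iteratedFDeriv k)
    refine ⟨univ, univ_mem, _, h.integrable_mul_min.const_mul C, .of_forall fun z y _ ↦ ?_⟩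
    rw [iteratedFDeriv_const_smul_secondDiff hf, mul_left_comm]
    exact (h.norm_smul_eq z _).trans_le (mul_le_mul_of_nonneg_left (hC y z) (h.nonneg z))

theorem contDiff_levyOp (h : IsLevyKernel κ) (hf : ContDiff ℝ ∞ f)
    (hfc : HasCompactSupport f) : ContDiff ℝ ∞ (levyOp κ f) :=
  (h.isSmoothIntegrand_levyOp hf hfc).contDiff_integral

theorem iteratedFDeriv_levyOp (h : IsLevyKernel κ) (hf : ContDiff ℝ ∞ f)
    (hfc : HasCompactSupport f) (k : ℕ) (x : E) :
    iteratedFDeriv ℝ k (levyOp κ f) x = levyOp κ (iteratedFDeriv ℝ k f) x := by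
  refine ((h.isSmoothIntegrand_levyOp hf hfc).iteratedFDeriv_integral k x).trans ?_
  simp only [iteratedFDeriv_const_smul_secondDiff hf, levyOp]

end IsLevyKernel

end LevyOperator

section Duality

variable {E F : Type*} [NormedAddCommGroup E] [MeasureSpace E] [BorelSpace E]
  [(volume : Measure E).IsAddHaarMeasure] [NormedAddCommGroup F] [NormedSpace ℝ F]
  {κ V : E → ℝ} {g : E → F} {f : E → ℝ} {M : ℝ}

theorem integrable_secondDiff (hg : Integrable g) (z : E) :
    Integrable fun x ↦ secondDiff g x z :=
  ((hg.smul 2).sub (hg.comp_add_right z)).sub (hg.comp_sub_right z)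

theorem integral_norm_secondDiff_le (hg : Integrable g) (z : E) :
    ∫ x, ‖secondDiff g x z‖ ≤ 4 * ∫ x, ‖g x‖ := by
  have h₀ := hg.norm.const_mul 2
  have h₁ := hg.norm.comp_add_right z
  have h₂ := hg.norm.comp_sub_right z
  calc _ ≤ ∫ x, (2 * ‖g x‖ + ‖g (x + z)‖ + ‖g (x - z)‖) :=
        integral_mono (integrable_secondDiff hg z).norm ((h₀.add h₁).add h₂)
          fun x ↦ norm_secondDiff_le_add g x z
    _ = 4 * ∫ x, ‖g x‖ := by
        rw [integral_add (by exact h₀.add h₁) h₂, integral_add h₀ h₁, integral_const_mul,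
          integral_add_right_eq_self (fun x ↦ ‖g x‖), integral_sub_right_eq_self (fun x ↦ ‖g x‖)]
        ring

variable [NormedSpace ℝ E] [FiniteDimensional ℝ E]

theorem exists_integral_norm_secondDiff_le_min (hg : ContDiff ℝ 2 g) (hgc : HasCompactSupport g) :
    ∃ C, ∀ z, ∫ x, ‖secondDiff g x z‖ ≤ C * min 1 (‖z‖ ^ 2) := by
  obtain ⟨C, -, hC⟩ := exists_norm_secondDiff_le_min hg hgc
  obtain ⟨R, hR⟩ := hgc.isCompact.isBounded.subset_closedBall 0
  have hzero {x : E} (hx : R < ‖x‖) : g x = 0 := by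
    by_contra h
    exact hx.not_ge (mem_closedBall_zero_iff.1 (hR (subset_tsupport g h)))
  refine ⟨max (C * volume.real (closedBall (0 : E) (R + 1))) (4 * ∫ x, ‖g x‖), fun z ↦ ?_⟩
  obtain hz | hz := le_total 1 ‖z‖
  · rw [min_eq_left (one_le_pow₀ hz), mul_one]
    exact (integral_norm_secondDiff_le (hg.continuous.integrable_of_hasCompactSupport hgc) z).trans
      (le_max_right _ _)
  · have hvanish : ∀ x ∉ closedBall (0 : E) (R + 1), ‖secondDiff g x z‖ = 0 := fun x hx ↦ by
      rw [mem_closedBall_zero_iff, not_le] at hx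
      have hadd : ‖x‖ - ‖z‖ ≤ ‖x + z‖ := norm_sub_le_norm_add x z
      rw [secondDiff, hzero (by linarith), hzero (x := x + z) (by linarith),
        hzero (x := x - z) (by linarith [norm_sub_norm_le x z])]
      simp
    rw [← setIntegral_eq_integral_of_forall_compl_eq_zero hvanish]
    calc _ ≤ ‖∫ x in closedBall (0 : E) (R + 1), ‖secondDiff g x z‖‖ := Real.le_norm_self _
      _ ≤ C * min 1 (‖z‖ ^ 2) * volume.real (closedBall (0 : E) (R + 1)) :=
        norm_setIntegral_le_of_norm_le_const measure_closedBall_lt_top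
          fun x _ ↦ (norm_norm _).trans_le (hC x z)
      _ ≤ _ := by rw [mul_right_comm]; gcongr; exact le_max_left _ _

theorem integrable_prod_smul_secondDiff_of_le {b : E → ℝ} (hκ : Measurable κ) (hκ0 : ∀ z, 0 ≤ κ z)
    (hg : Continuous g) (hgi : Integrable g) (hb : ∀ z, ∫ x, ‖secondDiff g x z‖ ≤ b z)
    (hκb : Integrable fun z ↦ κ z * b z) :
    Integrable (fun p : E × E ↦ κ p.2 • secondDiff g p.1 p.2) (volume.prod volume) := by
  have hm : AEStronglyMeasurable (fun p : E × E ↦ κ p.2 • secondDiff g p.1 p.2)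
      (volume.prod volume) :=
    hκ.aestronglyMeasurable.comp_snd.smul (continuous_secondDiff hg).aestronglyMeasurable
  refine (integrable_prod_iff' hm).2
    ⟨.of_forall fun z ↦ (integrable_secondDiff hgi z).smul (κ z), ?_⟩
  refine hκb.mono' hm.norm.prod_swap.integral_prod_right' (.of_forall fun z ↦ ?_)
  simp only [norm_smul, Real.norm_of_nonneg (hκ0 z)]
  rw [integral_const_mul, Real.norm_of_nonneg
    (mul_nonneg (hκ0 z) (integral_nonneg fun x ↦ norm_nonneg _))]
  exact mul_le_mul_of_nonneg_left (hb z) (hκ0 z)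

theorem IsLevyKernel.integrable_prod_smul_secondDiff (h : IsLevyKernel κ) (hg : ContDiff ℝ 2 g)
    (hgc : HasCompactSupport g) :
    Integrable (fun p : E × E ↦ κ p.2 • secondDiff g p.1 p.2) (volume.prod volume) := by
  obtain ⟨C, hC⟩ := exists_integral_norm_secondDiff_le_min hg hgc
  refine integrable_prod_smul_secondDiff_of_le h.measurable h.nonneg hg.continuous
    (hg.continuous.integrable_of_hasCompactSupport hgc) hC ?_
  simpa only [mul_left_comm] using h.integrable_mul_min.const_mul C

theorem IsLevyKernel.integrable_levyOp (h : IsLevyKernel κ) (hg : ContDiff ℝ 2 g)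
    (hgc : HasCompactSupport g) : Integrable (levyOp κ g) :=
  (h.integrable_prod_smul_secondDiff hg hgc).integral_prod_left

theorem integral_mul_secondDiff_comm (hf : Integrable f) (hV : AEStronglyMeasurable V)
    (hM : ∀ x, |V x| ≤ M) (z : E) :
    ∫ x, V x * secondDiff f x z = ∫ x, f x * secondDiff V x z := by
  have hprod (w : E) : Integrable fun x ↦ V (x + w) * f x :=
    hf.bdd_mul (hV.comp_quasiMeasurePreserving (quasiMeasurePreserving_add_right volume w))
      (.of_forall fun x ↦ hM _)
  have hshift (w : E) : Integrable (fun x ↦ V x * f (x + w)) ∧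
      ∫ x, V x * f (x + w) = ∫ x, V (x + -w) * f x := by
    have heq : (fun x ↦ V x * f (x + w)) = fun x ↦ V (x + w + -w) * f (x + w) := by simp
    rw [heq]
    exact ⟨(hprod (-w)).comp_add_right w,
      integral_add_right_eq_self (fun x ↦ V (x + -w) * f x) w⟩
  have h0 := (hprod 0).const_mul 2
  have hl (x : E) : V x * secondDiff f x z =
      2 * (V (x + 0) * f x) - V x * f (x + z) - V x * f (x + -z) := by
    rw [secondDiff, smul_eq_mul, add_zero, sub_eq_add_neg x z]; ring
  have hr (x : E) : f x * secondDiff V x z =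
      2 * (V (x + 0) * f x) - V (x + z) * f x - V (x + -z) * f x := by
    rw [secondDiff, smul_eq_mul, add_zero, sub_eq_add_neg x z]; ring
  simp only [hl, hr]
  rw [integral_sub (by exact h0.sub (hshift z).1) (hshift (-z)).1, integral_sub h0 (hshift z).1,
    integral_sub (by exact h0.sub (hprod z)) (hprod (-z)), integral_sub h0 (hprod z), (hshift z).2,
    (hshift (-z)).2, neg_neg, sub_right_comm]

theorem integral_mul_levyOp_comm (hκ : Measurable κ) (hκ0 : ∀ z, 0 ≤ κ z) (hκi : Integrable κ)
    (hf : Continuous f) (hfi : Integrable f) (hV : Continuous V) (hM : ∀ x, |V x| ≤ M) :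
    ∫ x, V x * levyOp κ f x = ∫ x, f x * levyOp κ V x := by
  have hint : Integrable (fun p : E × E ↦ f p.1 * κ p.2 * secondDiff V p.1 p.2)
      (volume.prod volume) :=
    (hfi.mul_prod hκi).mul_bdd (continuous_secondDiff hV).aestronglyMeasurable
      (.of_forall fun p ↦ norm_secondDiff_le hM p.1 p.2)
  have hswap := integral_integral_swap (f := fun x z ↦ f x * κ z * secondDiff V x z) hint
  simp only [mul_assoc, mul_left_comm (f _), integral_const_mul] at hswap
  rw [integral_mul_levyOp hV.aestronglyMeasurable hM (integrable_prod_smul_secondDiff_of_le hκ hκ0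
    hf hfi (integral_norm_secondDiff_le hfi) (hκi.mul_const _))]
  simp only [integral_mul_secondDiff_comm hfi hV.aestronglyMeasurable hM, levyOp, smul_eq_mul,
    ← integral_const_mul, mul_left_comm (f _)]
  simpa only [integral_const_mul] using hswap.symm

end Duality

section Truncation

variable {E F : Type*} [NormedAddCommGroup E] [MeasureSpace E] [BorelSpace E]
  [NormedAddCommGroup F] [NormedSpace ℝ F] {κ V : E → ℝ} {g : E → F} {f : E → ℝ} {M ε : ℝ}

theorem integrable_mul_sub_comp_add (hκ : Integrable κ) (hV : Measurable V) (hM : ∀ x, |V x| ≤ M)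
    (x : E) : Integrable fun z ↦ κ z * (V x - V (x + z)) :=
  hκ.mul_bdd (measurable_const.sub (hV.comp (measurable_const_add x))).aestronglyMeasurable
    (.of_forall fun z ↦ norm_sub_le_of_le (hM x) (hM (x + z)))

variable [NormedSpace ℝ E] [FiniteDimensional ℝ E]

theorem levyOp_eq_two_mul_integral [(volume : Measure E).IsAddHaarMeasure]
    (hκ : Integrable κ) (heven : ∀ z, κ (-z) = κ z) (hV : Measurable V) (hM : ∀ x, |V x| ≤ M)
    (x : E) : levyOp κ V x = 2 * ∫ z, κ z * (V x - V (x + z)) := by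
  have hint := integrable_mul_sub_comp_add hκ hV hM x
  have hneg (z : E) : κ z * (V x - V (x + -z)) = κ (-z) * (V x - V (x + -z)) := by rw [heven]
  simp only [levyOp, secondDiff_eq_add, smul_eq_mul, mul_add, hneg]
  rw [integral_add hint hint.comp_neg,
    integral_neg_eq_self (fun z ↦ κ z * (V x - V (x + z))), two_mul]

namespace IsLevyKernel

theorem norm_levyOp_truncKernel_le (h : IsLevyKernel κ) (hg : ContDiff ℝ 2 g)
    (hgc : HasCompactSupport g) (ε : ℝ) (x : E) :
    ‖levyOp (truncKernel ε κ) g x‖ ≤ ∫ z, ‖κ z • secondDiff g x z‖ := by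
  refine norm_integral_le_of_norm_le (h.integrable_smul_secondDiff hg hgc x).norm
    (.of_forall fun z ↦ ?_)
  rw [(h.truncKernel ε).norm_smul_eq, h.norm_smul_eq]
  gcongr
  exact h.truncKernel_le ε z

theorem tendsto_levyOp_truncKernel (h : IsLevyKernel κ) (hg : ContDiff ℝ 2 g)
    (hgc : HasCompactSupport g) (x : E) :
    Tendsto (fun ε ↦ levyOp (truncKernel ε κ) g x) (𝓝[>] 0) (𝓝 (levyOp κ g x)) := by
  refine tendsto_integral_filter_of_dominated_convergence _ (.of_forall fun ε ↦ ?_)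
    (.of_forall fun ε ↦ .of_forall fun z ↦ ?_) (h.integrable_smul_secondDiff hg hgc x).norm
    (.of_forall fun z ↦ ?_)
  · exact ((h.truncKernel ε).integrable_smul_secondDiff hg hgc x).aestronglyMeasurable
  · rw [(h.truncKernel ε).norm_smul_eq, h.norm_smul_eq]
    gcongr
    exact h.truncKernel_le ε z
  · obtain rfl | hz := eq_or_ne z 0
    · simp [secondDiff, two_smul]
    · exact tendsto_const_nhds.congr' <|
        (eventually_truncKernel_eq (κ := κ) hz).mono fun ε hε ↦ by simp only [hε]

theorem tendsto_integral_mul_levyOp_truncKernel [(volume : Measure E).IsAddHaarMeasure]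
    (h : IsLevyKernel κ) (hf : ContDiff ℝ 2 f) (hfc : HasCompactSupport f)
    (hV : AEStronglyMeasurable V) (hM : ∀ x, |V x| ≤ M) :
    Tendsto (fun ε ↦ ∫ x, V x * levyOp (truncKernel ε κ) f x) (𝓝[>] 0)
      (𝓝 (∫ x, V x * levyOp κ f x)) := by
  refine tendsto_integral_filter_of_dominated_convergence
    (fun x ↦ M * ∫ z, ‖κ z • secondDiff f x z‖) (.of_forall fun ε ↦ ?_)
    (.of_forall fun ε ↦ .of_forall fun x ↦ ?_)
    ((h.integrable_prod_smul_secondDiff hf hfc).norm.integral_prod_left.const_mul M)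
    (.of_forall fun x ↦ (h.tendsto_levyOp_truncKernel hf hfc x).const_mul _)
  · exact hV.mul ((h.truncKernel ε).integrable_levyOp hf hfc).aestronglyMeasurable
  · rw [norm_mul]
    exact mul_le_mul (hM x) (h.norm_levyOp_truncKernel_le hf hfc ε x) (norm_nonneg _)
      ((abs_nonneg _).trans (hM x))

end IsLevyKernel

end Truncation

section SupConvolution

variable {E : Type*} [NormedAddCommGroup E] {v : E → ℝ} {M N : ℝ} {x y q : E}

/-- The quadratic sup-convolution of `v` with parameter `N`. It is semiconvex, and it decreases
to `v` as `N → ∞`. -/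
noncomputable def supConv (N : ℝ) (v : E → ℝ) (x : E) : ℝ := ⨆ y, v y - N * ‖x - y‖ ^ 2

theorem sub_le_supConv (hM : ∀ x, |v x| ≤ M) (hN : 0 ≤ N) (x y : E) :
    v y - N * ‖x - y‖ ^ 2 ≤ supConv N v x := by
  refine le_ciSup (f := fun y ↦ v y - N * ‖x - y‖ ^ 2) ⟨M, ?_⟩ y
  rintro _ ⟨y, rfl⟩
  exact (sub_le_self _ (by positivity)).trans (le_of_abs_le (hM y))

theorem le_supConv (hM : ∀ x, |v x| ≤ M) (hN : 0 ≤ N) (x : E) : v x ≤ supConv N v x := by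
  simpa using sub_le_supConv hM hN x x

theorem abs_supConv_le (hM : ∀ x, |v x| ≤ M) (hN : 0 ≤ N) (x : E) : |supConv N v x| ≤ M := by
  refine abs_le.2 ⟨(neg_le_of_abs_le (hM x)).trans (le_supConv hM hN x), ciSup_le fun y ↦ ?_⟩
  exact (sub_le_self _ (by positivity)).trans (le_of_abs_le (hM y))

theorem exists_supConv_eq [ProperSpace E] (hv : Continuous v) (hM : ∀ x, |v x| ≤ M) (hN : 0 < N)
    (x : E) : ∃ q, supConv N v x = v q - N * ‖x - q‖ ^ 2 := by
  obtain ⟨q, -, hq⟩ := (isCompact_closedBall x √(2 * M / N)).exists_isMaxOn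
    (f := fun y ↦ v y - N * ‖x - y‖ ^ 2) ⟨x, mem_closedBall_self (by positivity)⟩ (by fun_prop)
  refine ⟨q, le_antisymm (ciSup_le fun y ↦ ?_) (sub_le_supConv hM hN.le x q)⟩
  by_cases hy : y ∈ closedBall x √(2 * M / N)
  · exact hq hy
  · have hfar : 2 * M < ‖x - y‖ ^ 2 * N := by
      rw [mem_closedBall', dist_eq_norm, not_le] at hy
      rwa [← div_lt_iff₀ hN, ← Real.sqrt_lt' (hy.trans_le' (Real.sqrt_nonneg _))]
    have hx : v x - N * ‖x - x‖ ^ 2 ≤ v q - N * ‖x - q‖ ^ 2 :=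
      hq (mem_closedBall_self (Real.sqrt_nonneg _))
    rw [sub_self, norm_zero] at hx
    linarith [abs_le.1 (hM x), abs_le.1 (hM y)]

theorem mul_sq_norm_sub_le_of_supConv_eq (hM : ∀ x, |v x| ≤ M) (hN : 0 ≤ N)
    (hq : supConv N v x = v q - N * ‖x - q‖ ^ 2) : N * ‖x - q‖ ^ 2 ≤ 2 * M := by
  linarith [le_supConv hM hN x, abs_le.1 (hM x), abs_le.1 (hM q)]

theorem norm_sub_le_of_supConv_eq (hM : ∀ x, |v x| ≤ M) (hN : 0 < N)
    (hq : supConv N v x = v q - N * ‖x - q‖ ^ 2) : ‖x - q‖ ≤ √(2 * M / N) := by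
  refine Real.le_sqrt_of_sq_le ((le_div_iff₀ hN).2 ?_)
  rw [mul_comm]
  exact mul_sq_norm_sub_le_of_supConv_eq hM hN.le hq

theorem supConv_sub_supConv_add_le_of_supConv_eq (hM : ∀ x, |v x| ≤ M) (hN : 0 ≤ N)
    (hq : supConv N v x = v q - N * ‖x - q‖ ^ 2) (z : E) :
    supConv N v x - supConv N v (x + z) ≤ v q - v (q + z) := by
  have h := sub_le_supConv hM hN (x + z) (q + z)
  rw [add_sub_add_right_eq_sub] at h
  linarith

theorem supConv_sub_supConv_le [ProperSpace E] (hv : Continuous v) (hM : ∀ x, |v x| ≤ M)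
    (hN : 0 < N) (x y : E) : supConv N v x - supConv N v y ≤
      N * (2 * √(2 * M / N) * ‖x - y‖ + ‖x - y‖ ^ 2) := by
  obtain ⟨q, hq⟩ := exists_supConv_eq hv hM hN x
  have hle := sub_le_supConv hM hN.le y q
  have hsq : ‖y - q‖ ^ 2 ≤ (‖x - y‖ + ‖x - q‖) ^ 2 := by
    gcongr
    rw [norm_sub_rev x y]
    exact norm_sub_le_norm_sub_add_norm_sub y x q
  have hxq := norm_sub_le_of_supConv_eq hM hN hq
  calc _ ≤ N * (‖y - q‖ ^ 2 - ‖x - q‖ ^ 2) := by linarith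
    _ ≤ N * (2 * ‖x - q‖ * ‖x - y‖ + ‖x - y‖ ^ 2) := by gcongr; linarith
    _ ≤ _ := by gcongr

theorem continuous_supConv [ProperSpace E] (hv : Continuous v) (hM : ∀ x, |v x| ≤ M)
    (hN : 0 < N) : Continuous (supConv N v) := by
  refine continuous_iff_continuousAt.2 fun x ↦ tendsto_iff_dist_tendsto_zero.2 ?_
  have hmod : Tendsto (fun y ↦ N * (2 * √(2 * M / N) * ‖x - y‖ + ‖x - y‖ ^ 2)) (𝓝 x) (𝓝 0) :=
    Continuous.tendsto' (by fun_prop) _ _ (by simp)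
  refine squeeze_zero (fun _ ↦ dist_nonneg) (fun y ↦ abs_sub_le_iff.2 ⟨?_, ?_⟩) hmod
  · rw [norm_sub_rev]
    exact supConv_sub_supConv_le hv hM hN y x
  · exact supConv_sub_supConv_le hv hM hN x y

theorem tendsto_supConv [ProperSpace E] (hv : Continuous v) (hM : ∀ x, |v x| ≤ M) (x : E) :
    Tendsto (fun N ↦ supConv N v x) atTop (𝓝 (v x)) := by
  choose! q hq using fun (N : ℝ) (hN : 0 < N) ↦ exists_supConv_eq hv hM hN x
  have hsqrt : Tendsto (fun N ↦ √(2 * M / N)) atTop (𝓝 0) := by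
    simpa using (tendsto_const_nhds.div_atTop tendsto_id).sqrt
  have hqx : Tendsto q atTop (𝓝 x) := by
    refine tendsto_iff_norm_sub_tendsto_zero.2 (squeeze_zero' (.of_forall fun _ ↦ norm_nonneg _)
      ?_ hsqrt)
    filter_upwards [eventually_gt_atTop 0] with N hN
    rw [norm_sub_rev]
    exact norm_sub_le_of_supConv_eq hM hN (hq N hN)
  refine tendsto_of_tendsto_of_tendsto_of_le_of_le' tendsto_const_nhds
    ((hv.tendsto x).comp hqx) ?_ ?_
  · exact (eventually_ge_atTop 0).mono fun N hN ↦ le_supConv hM hN x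
  · filter_upwards [eventually_gt_atTop 0] with N hN
    rw [hq N hN]
    exact sub_le_self _ (by positivity)

theorem secondDiff_supConv_le {E : Type*} [NormedAddCommGroup E] [InnerProductSpace ℝ E]
    [ProperSpace E] {v : E → ℝ} (hv : Continuous v) (hM : ∀ x, |v x| ≤ M) (hN : 0 < N) (x z : E) :
    secondDiff (supConv N v) x z ≤ 2 * N * ‖z‖ ^ 2 := by
  obtain ⟨q, hq⟩ := exists_supConv_eq hv hM hN x
  have hadd := sub_le_supConv hM hN.le (x + z) q
  have hsub := sub_le_supConv hM hN.le (x - z) q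
  have hpar := parallelogram_law_with_norm ℝ (x - q) z
  rw [← add_sub_right_comm, ← sub_right_comm] at hpar
  calc _ ≤ N * (‖x + z - q‖ ^ 2 + ‖x - z - q‖ ^ 2 - 2 * ‖x - q‖ ^ 2) := by
        rw [secondDiff, smul_eq_mul]; linarith
    _ = 2 * N * ‖z‖ ^ 2 := by rw [hpar]; ring

end SupConvolution

section NonlocalHarmonic

variable {E : Type*} [NormedAddCommGroup E] [MeasureSpace E] {κ v : E → ℝ} {x : E}

/-- `v` is harmonic at `x` for the nonlocal operator with kernel `κ`: the principal value of
`∫ z, κ z * (v x - v (x + z))` exists and is zero. This is the pointwise notion, with `κ`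
truncated to `ε < ‖z‖` and `ε → 0⁺`. -/
def IsNonlocalHarmonicAt (κ v : E → ℝ) (x : E) : Prop :=
  Tendsto (fun ε ↦ ∫ z, truncKernel ε κ z * (v x - v (x + z))) (𝓝[>] 0) (𝓝 0)

namespace IsNonlocalHarmonicAt

theorem neg (h : IsNonlocalHarmonicAt κ v x) : IsNonlocalHarmonicAt κ (-v) x := by
  have hneg := Tendsto.neg h
  rw [neg_zero] at hneg
  refine hneg.congr fun ε ↦ ?_
  rw [← integral_neg]
  congr with z
  rw [Pi.neg_apply, Pi.neg_apply]
  ring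

theorem comp_const_add {a : E} (h : IsNonlocalHarmonicAt κ v (a + x)) :
    IsNonlocalHarmonicAt κ (fun y ↦ v (a + y)) x := by
  simpa only [IsNonlocalHarmonicAt, add_assoc] using h

end IsNonlocalHarmonicAt

end NonlocalHarmonic

section MaximumPrinciple

variable {E : Type*} [NormedAddCommGroup E] [NormedSpace ℝ E] [MeasureSpace E] [BorelSpace E]
  [(volume : Measure E).IsAddHaarMeasure] {κ v : E → ℝ} {U : Set E} {M M₀ ε R : ℝ}

theorem IsLevyKernel.integral_truncKernel_pos [Nontrivial E] (hκ : IsLevyKernel κ)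
    (hpos : ∀ z ≠ 0, 0 < κ z) (hε : 0 < ε) : 0 < ∫ z, truncKernel ε κ z := by
  rw [integral_pos_iff_support_of_nonneg (hκ.truncKernel_nonneg ε) (hκ.integrable_truncKernel hε)]
  obtain ⟨w, hw⟩ := NormedSpace.exists_lt_norm ℝ E ε
  refine ((isOpen_lt continuous_const continuous_norm).measure_pos volume ⟨w, hw⟩).trans_le
    (measure_mono fun z hz ↦ ?_)
  rw [Function.mem_support, truncKernel, indicator_of_mem hz]
  exact (hpos z (norm_pos_iff.1 (hε.trans hz))).ne'

theorem IsLevyKernel.not_isNonlocalHarmonicAt_of_isMax [Nontrivial E] (hκ : IsLevyKernel κ)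
    (hpos : ∀ z ≠ 0, 0 < κ z) (hv : Measurable v) (hM₀ : ∀ x, |v x| ≤ M₀) {x : E}
    (hmax : ∀ y, v y ≤ v x) (hR : 0 < R) (hM : M < v x) (hfar : ∀ z, R < ‖z‖ → v (x + z) ≤ M) :
    ¬ IsNonlocalHarmonicAt κ v x := fun h ↦ by
  have hc : 0 < ∫ z, truncKernel R κ z * (v x - M) := by
    rw [integral_mul_const]
    exact mul_pos (hκ.integral_truncKernel_pos hpos hR) (sub_pos.2 hM)
  refine hc.not_ge (ge_of_tendsto h ?_)
  filter_upwards [self_mem_nhdsWithin, mem_nhdsWithin_of_mem_nhds (Iio_mem_nhds hR)] with ε hε hεR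
  refine integral_mono ((hκ.integrable_truncKernel hR).mul_const _)
    (integrable_mul_sub_comp_add (hκ.integrable_truncKernel hε) hv hM₀ x) fun z ↦ ?_
  by_cases hz : R < ‖z‖
  · have hzR : truncKernel R κ z = κ z := indicator_of_mem (s := {z | R < ‖z‖}) hz κ
    have hzε : truncKernel ε κ z = κ z :=
      indicator_of_mem (s := {z | ε < ‖z‖}) (lt_trans hεR hz) κ
    simp only [hzR, hzε]
    exact mul_le_mul_of_nonneg_left (sub_le_sub_left (hfar z hz) _) (hκ.nonneg z)
  · have hzR : truncKernel R κ z = 0 := indicator_of_notMem (s := {z | R < ‖z‖}) hz κ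
    simp only [hzR, zero_mul]
    exact mul_nonneg (hκ.truncKernel_nonneg ε z) (sub_nonneg.2 (hmax _))

variable [FiniteDimensional ℝ E]

theorem IsLevyKernel.le_of_isNonlocalHarmonicAt [Nontrivial E] (hκ : IsLevyKernel κ)
    (hpos : ∀ z ≠ 0, 0 < κ z) (hv : Continuous v) (hM₀ : ∀ x, |v x| ≤ M₀)
    (hU : Bornology.IsBounded U) (hh : ∀ x ∈ U, IsNonlocalHarmonicAt κ v x)
    (hM : ∀ y ∉ U, v y ≤ M) (x : E) : v x ≤ M := by
  by_contra! hx
  have hmem {y : E} (hy : M < v y) : y ∈ U := not_imp_comm.1 (hM y) hy.not_ge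
  obtain ⟨R, hR, hUR⟩ := hU.subset_closedBall_lt 0 0
  obtain ⟨x₀, -, hx₀⟩ := (isCompact_closedBall (0 : E) R).exists_isMaxOn
    ⟨0, mem_closedBall_self hR.le⟩ hv.continuousOn
  have hMx₀ : M < v x₀ := hx.trans_le (hx₀ (hUR (hmem hx)))
  have hmax (y : E) : v y ≤ v x₀ := by
    by_cases hy : y ∈ U
    · exact hx₀ (hUR hy)
    · exact (hM y hy).trans hMx₀.le
  refine hκ.not_isNonlocalHarmonicAt_of_isMax hpos hv.measurable hM₀ hmax (R := 2 * R)
    (by positivity) hMx₀ (fun z hz ↦ hM _ fun hzU ↦ ?_) (hh x₀ (hmem hMx₀))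
  have hxz := mem_closedBall_zero_iff.1 (hUR hzU)
  have hxx := mem_closedBall_zero_iff.1 (hUR (hmem hMx₀))
  have htri := norm_sub_le (x₀ + z) x₀
  rw [add_sub_cancel_left] at htri
  linarith

theorem IsLevyKernel.abs_le_of_isNonlocalHarmonicAt [Nontrivial E] (hκ : IsLevyKernel κ)
    (hpos : ∀ z ≠ 0, 0 < κ z) (hv : Continuous v) (hM₀ : ∀ x, |v x| ≤ M₀)
    (hU : Bornology.IsBounded U) (hh : ∀ x ∈ U, IsNonlocalHarmonicAt κ v x)
    (hM : ∀ y ∉ U, |v y| ≤ M) (x : E) : |v x| ≤ M :=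
  abs_le'.2 ⟨hκ.le_of_isNonlocalHarmonicAt hpos hv hM₀ hU hh
      (fun y hy ↦ (le_abs_self _).trans (hM y hy)) x,
    hκ.le_of_isNonlocalHarmonicAt hpos hv.neg (fun y ↦ (abs_neg _).trans_le (hM₀ y)) hU
      (fun y hy ↦ (hh y hy).neg) (fun y hy ↦ (neg_le_abs _).trans (hM y hy)) x⟩

end MaximumPrinciple

section WeakFormulation

variable {E : Type*} [NormedAddCommGroup E] [MeasureSpace E]
  {κ v V f : E → ℝ} {U : Set E} {M N C ε : ℝ}

theorem norm_levyOp_le (hκ₀ : ∀ z, 0 ≤ κ z) (hκi : Integrable κ) (hM : ∀ x, |V x| ≤ M) (x : E) :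
    ‖levyOp κ V x‖ ≤ (∫ z, κ z) * (4 * M) := by
  rw [← integral_mul_const]
  refine norm_integral_le_of_norm_le (hκi.mul_const _) (.of_forall fun z ↦ ?_)
  rw [norm_smul, Real.norm_of_nonneg (hκ₀ z)]
  exact mul_le_mul_of_nonneg_left (norm_secondDiff_le hM x z) (hκ₀ z)

variable [BorelSpace E]

theorem IsLevyKernel.levyOp_truncKernel_le (hκ : IsLevyKernel κ) (hV : Continuous V)
    (hM : ∀ x, |V x| ≤ M) (hC : 0 ≤ C) {x : E}
    (hVC : ∀ z, secondDiff V x z ≤ C * min 1 (‖z‖ ^ 2)) (hε : 0 < ε) :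
    levyOp (truncKernel ε κ) V x ≤ C * ∫ z, κ z * min 1 (‖z‖ ^ 2) := by
  rw [← integral_const_mul]
  refine integral_mono ((hκ.integrable_truncKernel hε).mul_bdd
    (continuous_secondDiff_right hV x).aestronglyMeasurable (.of_forall (norm_secondDiff_le hM x)))
    (hκ.integrable_mul_min.const_mul C) fun z ↦ ?_
  calc _ ≤ truncKernel ε κ z * (C * min 1 (‖z‖ ^ 2)) :=
        mul_le_mul_of_nonneg_left (hVC z) (hκ.truncKernel_nonneg ε z)
    _ ≤ κ z * (C * min 1 (‖z‖ ^ 2)) := by gcongr; exact hκ.truncKernel_le ε z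
    _ = _ := mul_left_comm _ _ _

variable [InnerProductSpace ℝ E] [FiniteDimensional ℝ E] [(volume : Measure E).IsAddHaarMeasure]

theorem stronglyMeasurable_levyOp (hκ : Measurable κ) (hV : Continuous V) :
    StronglyMeasurable (levyOp κ V) :=
  StronglyMeasurable.integral_prod_right' (f := fun p : E × E ↦ κ p.2 • secondDiff V p.1 p.2)
    ((hκ.comp measurable_snd).smul (continuous_secondDiff hV).measurable).stronglyMeasurable

namespace IsLevyKernel

theorem tendsto_integral_mul_max_levyOp_truncKernel (hκ : IsLevyKernel κ) (hfi : Integrable f)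
    (hf₀ : ∀ x, 0 ≤ f x) (hV : Continuous V) (hM : ∀ x, |V x| ≤ M)
    (hC : 0 ≤ C) (hVC : ∀ x z, secondDiff V x z ≤ C * min 1 (‖z‖ ^ 2))
    (hlim : ∀ x, f x ≠ 0 →
      Tendsto (fun ε ↦ max (levyOp (truncKernel ε κ) V x) 0) (𝓝[>] 0) (𝓝 0)) :
    Tendsto (fun ε ↦ ∫ x, f x * max (levyOp (truncKernel ε κ) V x) 0) (𝓝[>] 0) (𝓝 0) := by
  have hC' : 0 ≤ C * ∫ z, κ z * min 1 (‖z‖ ^ 2) :=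
    mul_nonneg hC (integral_nonneg fun z ↦ mul_nonneg (hκ.nonneg z) (by positivity))
  rw [show 𝓝 (0 : ℝ) = 𝓝 (∫ _ : E, 0) by rw [integral_zero]]
  refine tendsto_integral_filter_of_dominated_convergence _ (.of_forall fun ε ↦ ?_) ?_
    (hfi.mul_const (C * ∫ z, κ z * min 1 (‖z‖ ^ 2))) (.of_forall fun x ↦ ?_)
  · exact hfi.aestronglyMeasurable.mul ((stronglyMeasurable_levyOp
      (hκ.truncKernel ε).measurable hV).measurable.max measurable_const).aestronglyMeasurable
  · filter_upwards [self_mem_nhdsWithin] with ε hε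
    refine .of_forall fun x ↦ ?_
    rw [Real.norm_of_nonneg (mul_nonneg (hf₀ x) (le_max_right _ _))]
    exact mul_le_mul_of_nonneg_left
      (max_le (hκ.levyOp_truncKernel_le hV hM hC (hVC x) hε) hC') (hf₀ x)
  · obtain hx | hx := eq_or_ne (f x) 0
    · simp only [hx, zero_mul, tendsto_const_nhds]
    · simpa only [mul_zero] using (hlim x hx).const_mul (f x)

theorem integral_mul_levyOp_nonpos (hκ : IsLevyKernel κ) (hf : ContDiff ℝ 2 f)
    (hfc : HasCompactSupport f) (hf₀ : ∀ x, 0 ≤ f x) (hV : Continuous V) (hM : ∀ x, |V x| ≤ M)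
    (hC : 0 ≤ C) (hVC : ∀ x z, secondDiff V x z ≤ C * min 1 (‖z‖ ^ 2))
    (hlim : ∀ x, f x ≠ 0 →
      Tendsto (fun ε ↦ max (levyOp (truncKernel ε κ) V x) 0) (𝓝[>] 0) (𝓝 0)) :
    ∫ x, V x * levyOp κ f x ≤ 0 := by
  have hfi : Integrable f := hf.continuous.integrable_of_hasCompactSupport hfc
  refine le_of_tendsto_of_tendsto
    (hκ.tendsto_integral_mul_levyOp_truncKernel hf hfc hV.aestronglyMeasurable hM)
    (hκ.tendsto_integral_mul_max_levyOp_truncKernel hfi hf₀ hV hM hC hVC hlim) ?_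
  filter_upwards [self_mem_nhdsWithin] with ε hε
  have hbdd := norm_levyOp_le (hκ.truncKernel_nonneg ε) (hκ.integrable_truncKernel hε) hM
  have hmeas := stronglyMeasurable_levyOp (hκ.truncKernel ε).measurable hV
  rw [integral_mul_levyOp_comm (hκ.truncKernel ε).measurable (hκ.truncKernel_nonneg ε)
    (hκ.integrable_truncKernel hε) hf.continuous hfi hV hM]
  refine integral_mono (hfi.mul_bdd hmeas.aestronglyMeasurable (.of_forall hbdd))
    (hfi.mul_bdd (c := (∫ z, truncKernel ε κ z) * (4 * M))
      (hmeas.measurable.max measurable_const).aestronglyMeasurable (.of_forall fun x ↦ ?_))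
    fun x ↦ mul_le_mul_of_nonneg_left (le_max_left _ _) (hf₀ x)
  exact (abs_max_le_max_abs_abs.trans_eq (by simp)).trans (hbdd x)

theorem tendsto_max_levyOp_truncKernel_supConv (hκ : IsLevyKernel κ) (hv : Continuous v)
    (hM : ∀ x, |v x| ≤ M) (hN : 0 < N) {x q : E} (hq : supConv N v x = v q - N * ‖x - q‖ ^ 2)
    (hh : IsNonlocalHarmonicAt κ v q) :
    Tendsto (fun ε ↦ max (levyOp (truncKernel ε κ) (supConv N v) x) 0) (𝓝[>] 0) (𝓝 0) := by
  have hlim := (hh.const_mul 2).max (tendsto_const_nhds (x := (0 : ℝ)))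
  rw [mul_zero, max_self] at hlim
  refine tendsto_of_tendsto_of_tendsto_of_le_of_le' tendsto_const_nhds hlim
    (.of_forall fun ε ↦ le_max_right _ _) ?_
  filter_upwards [self_mem_nhdsWithin] with ε hε
  have hκi := hκ.integrable_truncKernel hε
  have hVm := (continuous_supConv hv hM hN).measurable
  rw [levyOp_eq_two_mul_integral hκi (hκ.truncKernel ε).even hVm (abs_supConv_le hM hN.le)]
  refine max_le_max (mul_le_mul_of_nonneg_left ?_ zero_le_two) le_rfl
  refine integral_mono (integrable_mul_sub_comp_add hκi hVm (abs_supConv_le hM hN.le) x)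
    (integrable_mul_sub_comp_add hκi hv.measurable hM q) fun z ↦ ?_
  exact mul_le_mul_of_nonneg_left (supConv_sub_supConv_add_le_of_supConv_eq hM hN.le hq z)
    (hκ.truncKernel_nonneg ε z)

theorem eventually_integral_supConv_mul_levyOp_nonpos (hκ : IsLevyKernel κ)
    (hf : ContDiff ℝ 2 f) (hfc : HasCompactSupport f) (hf₀ : ∀ x, 0 ≤ f x) (hv : Continuous v)
    (hM : ∀ x, |v x| ≤ M) (hU : IsOpen U) (hfU : tsupport f ⊆ U)
    (hh : ∀ x ∈ U, IsNonlocalHarmonicAt κ v x) :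
    ∀ᶠ N in atTop, ∫ x, supConv N v x * levyOp κ f x ≤ 0 := by
  obtain ⟨δ, hδ, hδU⟩ := hfc.isCompact.exists_thickening_subset_open hU hfU
  have hsqrt : Tendsto (fun N ↦ √(2 * M / N)) atTop (𝓝 0) := by
    simpa using (tendsto_const_nhds.div_atTop tendsto_id).sqrt
  filter_upwards [eventually_gt_atTop 0, hsqrt.eventually_lt_const hδ] with N hN hNδ
  refine hκ.integral_mul_levyOp_nonpos hf hfc hf₀ (continuous_supConv hv hM hN)
    (abs_supConv_le hM hN.le) (C := max (4 * M) (2 * N)) (by positivity) (fun x z ↦ ?_)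
    fun x hx ↦ ?_
  · rw [mul_min_of_nonneg _ _ (by positivity), mul_one]
    exact le_min ((Real.le_norm_self _).trans ((norm_secondDiff_le (abs_supConv_le hM hN.le)
      x z).trans (le_max_left _ _))) ((secondDiff_supConv_le hv hM hN x z).trans
      (mul_le_mul_of_nonneg_right (le_max_right _ _) (sq_nonneg _)))
  · obtain ⟨q, hq⟩ := exists_supConv_eq hv hM hN x
    refine hκ.tendsto_max_levyOp_truncKernel_supConv hv hM hN hq (hh q (hδU ?_))
    refine mem_thickening_iff.2 ⟨x, subset_tsupport f hx, ?_⟩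
    rw [dist_comm, dist_eq_norm]
    exact (norm_sub_le_of_supConv_eq hM hN hq).trans_lt hNδ

theorem integral_mul_levyOp_nonpos_of_isNonlocalHarmonicAt (hκ : IsLevyKernel κ)
    (hf : ContDiff ℝ 2 f) (hfc : HasCompactSupport f) (hf₀ : ∀ x, 0 ≤ f x) (hv : Continuous v)
    (hM : ∀ x, |v x| ≤ M) (hU : IsOpen U) (hfU : tsupport f ⊆ U)
    (hh : ∀ x ∈ U, IsNonlocalHarmonicAt κ v x) : ∫ x, v x * levyOp κ f x ≤ 0 := by
  have hL := hκ.integrable_levyOp hf hfc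
  refine le_of_tendsto (tendsto_integral_filter_of_dominated_convergence
    (fun x ↦ M * ‖levyOp κ f x‖) ?_ ?_ (hL.norm.const_mul M)
    (.of_forall fun x ↦ (tendsto_supConv hv hM x).mul_const _))
    (hκ.eventually_integral_supConv_mul_levyOp_nonpos hf hfc hf₀ hv hM hU hfU hh)
  · filter_upwards [eventually_gt_atTop 0] with N hN
    exact (continuous_supConv hv hM hN).aestronglyMeasurable.mul hL.aestronglyMeasurable
  · filter_upwards [eventually_ge_atTop 0] with N hN
    refine .of_forall fun x ↦ ?_
    rw [norm_mul]
    exact mul_le_mul_of_nonneg_right (abs_supConv_le hM hN x) (norm_nonneg _)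

theorem integral_mul_levyOp_eq_zero_of_isNonlocalHarmonicAt (hκ : IsLevyKernel κ)
    (hf : ContDiff ℝ 2 f) (hfc : HasCompactSupport f) (hf₀ : ∀ x, 0 ≤ f x) (hv : Continuous v)
    (hM : ∀ x, |v x| ≤ M) (hU : IsOpen U) (hfU : tsupport f ⊆ U)
    (hh : ∀ x ∈ U, IsNonlocalHarmonicAt κ v x) : ∫ x, v x * levyOp κ f x = 0 := by
  refine le_antisymm
    (hκ.integral_mul_levyOp_nonpos_of_isNonlocalHarmonicAt hf hfc hf₀ hv hM hU hfU hh) ?_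
  have hneg := hκ.integral_mul_levyOp_nonpos_of_isNonlocalHarmonicAt hf hfc hf₀ hv.neg
    (fun x ↦ (abs_neg _).trans_le (hM x)) hU hfU fun x hx ↦ (hh x hx).neg
  simpa only [Pi.neg_apply, neg_mul, integral_neg, Left.neg_nonpos_iff] using hneg

end IsLevyKernel

end WeakFormulation

section FractionalKernel

variable {E F : Type*} [NormedAddCommGroup E] [NormedSpace ℝ E] [NormedAddCommGroup F]
  [NormedSpace ℝ F] {f : E → F} {s : ℝ}

/-- The kernel `‖z‖ ^ (-(d + 2 * s))`, `d = dim E`, of the fractional Laplacian of order `2 * s`,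
without its normalising constant. -/
noncomputable def fracKernel (s : ℝ) (z : E) : ℝ := ‖z‖ ^ (-(finrank ℝ E + 2 * s))

theorem fracKernel_pos {z : E} (hz : z ≠ 0) : 0 < fracKernel s z :=
  Real.rpow_pos_of_pos (norm_pos_iff.2 hz) _

theorem fracKernel_smul {c : ℝ} (hc : 0 ≤ c) (z : E) :
    fracKernel s (c • z) = c ^ (-(finrank ℝ E + 2 * s)) * fracKernel s z := by
  rw [fracKernel, norm_smul, Real.norm_of_nonneg hc, Real.mul_rpow hc (norm_nonneg z), fracKernel]

variable [FiniteDimensional ℝ E] [MeasureSpace E] [BorelSpace E]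
  [(volume : Measure E).IsAddHaarMeasure]

theorem IsNonlocalHarmonicAt.comp_smul {u : E → ℝ} {c : ℝ} {x : E} (hc : 0 < c)
    (h : IsNonlocalHarmonicAt (fracKernel s) u (c • x)) :
    IsNonlocalHarmonicAt (fracKernel s) (fun y ↦ u (c • y)) x := by
  have hc' : Tendsto (fun ε ↦ c * ε) (𝓝[>] 0) (𝓝[>] 0) := by
    refine tendsto_nhdsWithin_iff.2 ⟨?_, ?_⟩
    · exact (Continuous.tendsto' (by fun_prop) _ _ (mul_zero c)).mono_left nhdsWithin_le_nhds
    · filter_upwards [self_mem_nhdsWithin] with ε hε using mul_pos hc hε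
  have htrunc (ε : ℝ) (z : E) : truncKernel ε (fracKernel s) z =
      c ^ (finrank ℝ E + 2 * s) * truncKernel (c * ε) (fracKernel s) (c • z) := by
    have hnorm : ‖c • z‖ = c * ‖z‖ := by rw [norm_smul, Real.norm_of_nonneg hc.le]
    by_cases hz : ε < ‖z‖
    · simp only [truncKernel, indicator, mem_ofPred_eq, hnorm, mul_lt_mul_iff_right₀ hc, hz,
        if_true]
      rw [fracKernel_smul hc.le, ← mul_assoc, ← Real.rpow_add hc, add_neg_cancel, Real.rpow_zero,
        one_mul]
    · simp only [truncKernel, indicator, mem_ofPred_eq, hnorm, mul_lt_mul_iff_right₀ hc, hz,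
        if_false, mul_zero]
  have hlim := (Tendsto.comp h hc').const_mul
    (c ^ (finrank ℝ E + 2 * s) * |(c ^ finrank ℝ E)⁻¹|)
  rw [mul_zero] at hlim
  refine hlim.congr fun ε ↦ ?_
  have hint := Measure.integral_comp_smul (volume : Measure E)
    (fun z ↦ truncKernel (c * ε) (fracKernel s) z * (u (c • x) - u (c • x + z))) c
  simp only [htrunc ε, smul_add, mul_assoc, integral_const_mul, hint, smul_eq_mul,
    Function.comp_apply]

theorem levyOp_fracKernel_comp_smul {f : E → ℝ} {c : ℝ} (hc : 0 < c) (x : E) :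
    levyOp (fracKernel s) (fun y ↦ f (c • y)) x =
      c ^ (2 * s) * levyOp (fracKernel s) f (c • x) := by
  have hint := Measure.integral_comp_smul (volume : Measure E)
    (fun z ↦ fracKernel s z • secondDiff f (c • x) z) c
  have hterm (z : E) : fracKernel s z • secondDiff (fun y ↦ f (c • y)) x z =
      c ^ (finrank ℝ E + 2 * s) * (fracKernel s (c • z) • secondDiff f (c • x) (c • z)) := by
    rw [fracKernel_smul hc.le, smul_eq_mul, smul_eq_mul, ← mul_assoc, ← mul_assoc,
      ← Real.rpow_add hc, add_neg_cancel, Real.rpow_zero, one_mul]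
    simp only [secondDiff, smul_add, smul_sub]
  rw [levyOp, funext hterm, integral_const_mul, hint, abs_of_pos (by positivity), smul_eq_mul,
    ← mul_assoc, Real.rpow_add hc, Real.rpow_natCast, levyOp]
  congr 1
  field_simp

variable [Nontrivial E]

theorem integrable_fracKernel_mul_min (hs : s ∈ Ioo (0 : ℝ) 1) :
    Integrable fun z : E ↦ fracKernel s z * min 1 (‖z‖ ^ 2) := by
  have hpow {y : ℝ} (hy : 0 < y) (a : ℝ) : y ^ (finrank ℝ E - 1) * (y ^ (-(finrank ℝ E + 2 * s)) *
      y ^ a) = y ^ (a - 1 - 2 * s) := by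
    rw [← Real.rpow_natCast y (finrank ℝ E - 1), ← Real.rpow_add hy, ← Real.rpow_add hy,
      Nat.cast_pred finrank_pos]
    ring_nf
  refine (integrable_fun_norm_addHaar volume
    (f := fun y ↦ y ^ (-(finrank ℝ E + 2 * s)) * min 1 (y ^ 2))).2 ?_
  rw [← Ioc_union_Ioi_eq_Ioi zero_le_one]
  refine IntegrableOn.union ?_ ?_
  · have hint : IntegrableOn (fun y : ℝ ↦ y ^ (2 - 1 - 2 * s)) (Ioc 0 1) := by
      rw [← intervalIntegrable_iff_integrableOn_Ioc_of_le zero_le_one]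
      exact intervalIntegral.intervalIntegrable_rpow' (by linarith [hs.2])
    refine hint.congr_fun (fun y hy ↦ ?_) measurableSet_Ioc
    dsimp only
    rw [smul_eq_mul, min_eq_right (pow_le_one₀ hy.1.le hy.2), ← hpow hy.1 2, Real.rpow_two]
  · have hint : IntegrableOn (fun y : ℝ ↦ y ^ (0 - 1 - 2 * s)) (Ioi 1) :=
      integrableOn_Ioi_rpow_of_lt (by linarith [hs.1]) zero_lt_one
    refine hint.congr_fun (fun y (hy : 1 < y) ↦ ?_) measurableSet_Ioi
    dsimp only
    rw [smul_eq_mul, min_eq_left (one_le_pow₀ hy.le), ← hpow (zero_lt_one.trans hy) 0,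
      Real.rpow_zero]

theorem isLevyKernel_fracKernel (hs : s ∈ Ioo (0 : ℝ) 1) : IsLevyKernel (fracKernel s : E → ℝ) where
  measurable := measurable_norm.pow_const _
  nonneg z := Real.rpow_nonneg (norm_nonneg z) _
  even z := by rw [fracKernel, norm_neg, fracKernel]
  integrable_mul_min := integrable_fracKernel_mul_min hs

theorem norm_levyOp_fracKernel_le_of_support {R : ℝ} (hs : s ∈ Ioo (0 : ℝ) 1) (hfi : Integrable f)
    (hR : ∀ x, R < ‖x‖ → f x = 0) {x : E} (hx₀ : 0 < ‖x‖) (hRx : R < ‖x‖ / 2) :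
    ‖levyOp (fracKernel s) f x‖ ≤ (‖x‖ / 2) ^ (-(finrank ℝ E + 2 * s)) * (2 * ∫ y, ‖f y‖) := by
  set c := (‖x‖ / 2) ^ (-(finrank ℝ E + 2 * s))
  have hterm (z : E) : fracKernel s z * ‖f (x + z)‖ ≤ c * ‖f (x + z)‖ := by
    by_cases hxz : R < ‖x + z‖
    · simp [hR _ hxz]
    · refine mul_le_mul_of_nonneg_right (Real.rpow_le_rpow_of_nonpos (half_pos hx₀) ?_
        (by linarith [hs.1, Nat.cast_nonneg (α := ℝ) (finrank ℝ E)])) (norm_nonneg _)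
      linarith [norm_sub_le_norm_add x z]
  have hbound (z : E) :
      ‖fracKernel s z • secondDiff f x z‖ ≤ c * (‖f (x + z)‖ + ‖f (x - z)‖) := by
    have hsd := norm_secondDiff_le_add f x z
    rw [hR x (by linarith), norm_zero, mul_zero, zero_add] at hsd
    have hneg := hterm (-z)
    rw [(isLevyKernel_fracKernel hs).even, ← sub_eq_add_neg] at hneg
    rw [(isLevyKernel_fracKernel hs).norm_smul_eq]
    have := mul_le_mul_of_nonneg_left hsd ((isLevyKernel_fracKernel hs).nonneg z)
    linarith [hterm z]
  have hadd := hfi.norm.comp_add_left x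
  have hsub := hfi.norm.comp_sub_left x
  refine (norm_integral_le_of_norm_le ((hadd.add hsub).const_mul c) (.of_forall hbound)).trans_eq ?_
  rw [integral_const_mul]
  congr 1
  refine (integral_add hadd hsub).trans ?_
  rw [integral_add_left_eq_self (fun y ↦ ‖f y‖), integral_sub_left_eq_self (fun y ↦ ‖f y‖), two_mul]

theorem hasDecay_levyOp_fracKernel (hs : s ∈ Ioo (0 : ℝ) 1) (hf : ContDiff ℝ 2 f)
    (hfc : HasCompactSupport f) : HasDecay (finrank ℝ E + 2 * s) (levyOp (fracKernel s) f) := by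
  have hκ : IsLevyKernel (fracKernel s : E → ℝ) := isLevyKernel_fracKernel hs
  obtain ⟨C, -, hC⟩ := exists_norm_secondDiff_le_min hf hfc
  obtain ⟨R, hR, hfR⟩ := hfc.isCompact.isBounded.subset_closedBall_lt 0 0
  have hzero (x : E) (hx : R < ‖x‖) : f x = 0 := by
    by_contra h
    exact hx.not_ge (mem_closedBall_zero_iff.1 (hfR (subset_tsupport f h)))
  have hα : 0 ≤ finrank ℝ E + 2 * s := by linarith [hs.1, Nat.cast_nonneg (α := ℝ) (finrank ℝ E)]
  refine hasDecay_of_norm_le_rpow (R := 3 * R)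
    (B := ∫ z : E, C * (fracKernel s z * min 1 (‖z‖ ^ 2)))
    (C := 2⁻¹ ^ (-(finrank ℝ E + 2 * s)) * (2 * ∫ y, ‖f y‖)) hα
    (by positivity) (fun x ↦ ?_) fun x hx ↦ ?_
  · refine norm_integral_le_of_norm_le (hκ.integrable_mul_min.const_mul C) (.of_forall fun z ↦ ?_)
    rw [hκ.norm_smul_eq, mul_left_comm]
    exact mul_le_mul_of_nonneg_left (hC x z) (hκ.nonneg z)
  · refine (norm_levyOp_fracKernel_le_of_support hs
      (hf.continuous.integrable_of_hasCompactSupport hfc) hzero (by linarith)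
      (by linarith)).trans_eq ?_
    rw [div_eq_inv_mul, Real.mul_rpow (by positivity) (norm_nonneg x)]
    ring

theorem hasSmoothDecay_levyOp_fracKernel (hs : s ∈ Ioo (0 : ℝ) 1) (hf : ContDiff ℝ ∞ f)
    (hfc : HasCompactSupport f) :
    HasSmoothDecay (finrank ℝ E + 2 * s) (levyOp (fracKernel s) f) where
  contDiff := (isLevyKernel_fracKernel hs).contDiff_levyOp hf hfc
  hasDecay_iteratedFDeriv k := by
    rw [funext ((isLevyKernel_fracKernel hs).iteratedFDeriv_levyOp hf hfc k)]
    exact hasDecay_levyOp_fracKernel hs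
      (mod_cast contDiff_infty.1 (hf.iteratedFDeriv_right (m := ∞) (i := k) le_rfl) 2)
      (hfc.iteratedFDeriv k)

end FractionalKernel

section Energy

variable {E : Type*} [NormedAddCommGroup E] {κ V f : E → ℝ} {M : ℝ}

theorem integral_mul_secondDiff_eq_integral_sub_mul_sub [MeasurableSpace E] [BorelSpace E]
    [SecondCountableTopology E] {μ : Measure E} [SFinite μ] [μ.IsAddLeftInvariant]
    (hf : Integrable f μ) (hV : AEStronglyMeasurable V μ) (hM : ∀ x, |V x| ≤ M) (z : E) :
    ∫ x, V x * secondDiff f x z ∂μ = ∫ x, (V x - V (x + z)) * (f x - f (x + z)) ∂μ := by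
  set g := fun x ↦ f x - f (x + z) with hg
  have hgi : Integrable g μ := hf.sub (hf.comp_add_right z)
  have hVz : Integrable (fun x ↦ V (x + z) * g x) μ :=
    hgi.bdd_mul (hV.comp_quasiMeasurePreserving (quasiMeasurePreserving_add_right μ z))
      (.of_forall fun x ↦ hM (x + z))
  have hsplit (x : E) : V x * secondDiff f x z = V x * g x - V (x - z + z) * g (x - z) := by
    simp only [secondDiff, hg, sub_add_cancel, smul_eq_mul]
    ring
  simp only [hsplit, sub_mul]
  rw [integral_sub (hgi.bdd_mul hV (.of_forall hM)) (by exact hVz.comp_sub_right z),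
    integral_sub (hgi.bdd_mul hV (.of_forall hM)) hVz]
  exact congrArg _ (integral_sub_right_eq_self (fun x ↦ V (x + z) * g x) z)

/-- `f x` is a nonincreasing function of `‖x‖`; in particular `f` is radial. -/
def IsRadiallyAntitone (f : E → ℝ) : Prop := ∀ ⦃x y⦄, ‖x‖ ≤ ‖y‖ → f y ≤ f x

namespace IsRadiallyAntitone

theorem eq_of_norm_eq (hf : IsRadiallyAntitone f) {x y : E} (h : ‖x‖ = ‖y‖) : f x = f y :=
  (hf h.ge).antisymm (hf h.le)

theorem comp_smul [NormedSpace ℝ E] (hf : IsRadiallyAntitone f) (c : ℝ) :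
    IsRadiallyAntitone fun x ↦ f (c • x) := fun x y h ↦ hf <| by
  simpa only [norm_smul] using mul_le_mul_of_nonneg_left h (norm_nonneg c)

theorem sub_mul_sub_nonneg (hf : IsRadiallyAntitone f) (hV : IsRadiallyAntitone V) (x y : E) :
    0 ≤ (V x - V y) * (f x - f y) := by
  rcases le_total ‖x‖ ‖y‖ with h | h
  · exact mul_nonneg (sub_nonneg.2 (hV h)) (sub_nonneg.2 (hf h))
  · exact mul_nonneg_of_nonpos_of_nonpos (sub_nonpos.2 (hV h)) (sub_nonpos.2 (hf h))

variable [NormedSpace ℝ E] [FiniteDimensional ℝ E] [MeasureSpace E] [BorelSpace E]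
  [(volume : Measure E).IsAddHaarMeasure]

theorem integral_mul_secondDiff_nonneg (hf : IsRadiallyAntitone f) (hV : IsRadiallyAntitone V)
    (hfi : Integrable f) (hVm : AEStronglyMeasurable V) (hM : ∀ x, |V x| ≤ M) (z : E) :
    0 ≤ ∫ x, V x * secondDiff f x z := by
  rw [integral_mul_secondDiff_eq_integral_sub_mul_sub hfi hVm hM]
  exact integral_nonneg fun x ↦ hf.sub_mul_sub_nonneg hV _ _

theorem integral_mul_secondDiff_pos (hf : IsRadiallyAntitone f) (hV : IsRadiallyAntitone V)
    (hfc : Continuous f) (hfi : Integrable f) (hVc : Continuous V) (hM : ∀ x, |V x| ≤ M) {z : E}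
    (hfz : f z < f 0) (hVz : V z < V 0) : 0 < ∫ x, V x * secondDiff f x z := by
  have hint : Integrable fun x ↦ (V x - V (x + z)) * (f x - f (x + z)) :=
    (hfi.sub (hfi.comp_add_right z)).bdd_mul (c := M + M)
      (hVc.sub (by fun_prop)).aestronglyMeasurable
      (.of_forall fun x ↦ norm_sub_le_of_le (hM x) (hM (x + z)))
  have hcont : Continuous fun x ↦ (V x - V (x + z)) * (f x - f (x + z)) := by fun_prop
  rw [integral_mul_secondDiff_eq_integral_sub_mul_sub hfi hVc.aestronglyMeasurable hM,
    integral_pos_iff_support_of_nonneg (fun x ↦ hf.sub_mul_sub_nonneg hV _ _) hint]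
  refine hcont.isOpen_support.measure_pos _ ⟨0, ?_⟩
  rw [Function.mem_support, zero_add]
  exact (mul_pos (sub_pos.2 hVz) (sub_pos.2 hfz)).ne'

theorem integral_mul_levyOp_pos [Nontrivial E] (hf : IsRadiallyAntitone f)
    (hV : IsRadiallyAntitone V) (hκ : IsLevyKernel κ) (hpos : ∀ z ≠ 0, 0 < κ z)
    (hfs : ContDiff ℝ 2 f) (hfc : HasCompactSupport f) (hVc : Continuous V)
    (hM : ∀ x, |V x| ≤ M) {z₀ : E} (hfz : f z₀ < f 0) (hVz : V z₀ < V 0) :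
    0 < ∫ x, V x * levyOp κ f x := by
  have hfi : Integrable f := hfs.continuous.integrable_of_hasCompactSupport hfc
  have hprod := hκ.integrable_prod_smul_secondDiff hfs hfc
  have hint : Integrable fun z ↦ κ z * ∫ x, V x * secondDiff f x z := by
    refine (hprod.bdd_mul (hVc.aestronglyMeasurable.comp_fst) (c := M)
      (.of_forall fun p ↦ hM p.1)).integral_prod_right.congr (.of_forall fun z ↦ ?_)
    simp only [smul_eq_mul, ← integral_const_mul, mul_left_comm (V _)]
  rw [integral_mul_levyOp hVc.aestronglyMeasurable hM hprod, integral_pos_iff_support_of_nonneg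
    (fun z ↦ mul_nonneg (hκ.nonneg z)
      (hf.integral_mul_secondDiff_nonneg hV hfi hVc.aestronglyMeasurable hM z)) hint]
  have hopen : IsOpen {z : E | ‖z₀‖ < ‖z‖} := isOpen_lt continuous_const continuous_norm
  refine (hopen.measure_pos volume (NormedSpace.exists_lt_norm ℝ E ‖z₀‖)).trans_le
    (measure_mono fun z (hz : ‖z₀‖ < ‖z‖) ↦ ?_)
  exact (mul_pos (hpos z (norm_pos_iff.1 ((norm_nonneg z₀).trans_lt hz)))
    (hf.integral_mul_secondDiff_pos hV hfs.continuous hfi hVc hM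
      ((hf hz.le).trans_lt hfz) ((hV hz.le).trans_lt hVz))).ne'

end IsRadiallyAntitone

theorem IsLevyKernel.integral_levyOp_eq_zero [NormedSpace ℝ E] [FiniteDimensional ℝ E]
    [MeasureSpace E] [BorelSpace E] [(volume : Measure E).IsAddHaarMeasure] (hκ : IsLevyKernel κ)
    (hf : ContDiff ℝ 2 f) (hfc : HasCompactSupport f) : ∫ x, levyOp κ f x = 0 := by
  have h := integral_mul_levyOp (V := fun _ ↦ 1) (M := 1) aestronglyMeasurable_const (by simp)
    (hκ.integrable_prod_smul_secondDiff hf hfc)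
  have hzero (z : E) : ∫ x, 1 * secondDiff f x z = 0 := by
    rw [integral_mul_secondDiff_eq_integral_sub_mul_sub (V := fun _ ↦ 1) (M := 1)
      (hf.continuous.integrable_of_hasCompactSupport hfc) aestronglyMeasurable_const (by simp)]
    simp only [sub_self, zero_mul, integral_zero]
  simpa only [hzero, mul_zero, integral_zero, one_mul (levyOp κ f _)] using h

end Energy

theorem measurePreserving_linearIsometryEquiv {E : Type*} [NormedAddCommGroup E]
    [InnerProductSpace ℝ E] [FiniteDimensional ℝ E] [MeasurableSpace E] [BorelSpace E]
    (μ : Measure E) [μ.IsAddHaarMeasure] (L : E ≃ₗᵢ[ℝ] E) : MeasurePreserving L μ μ := by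
  have hdet : |LinearMap.det (L : E →ₗ[ℝ] E)| = 1 :=
    (LinearMap.normDet_eq_abs_det _).symm.trans L.toLinearIsometry.normDet_eq_one
  refine ⟨L.continuous.measurable, ?_⟩
  have hmap := Measure.map_linearMap_addHaar_eq_smul_addHaar μ (f := (L : E →ₗ[ℝ] E))
    (abs_ne_zero.1 (hdet.trans_ne one_ne_zero))
  rwa [abs_inv, hdet, inv_one, ENNReal.ofReal_one, one_smul] at hmap

theorem levyOp_eq_of_norm_eq {E F : Type*} [NormedAddCommGroup E] [InnerProductSpace ℝ E]
    [FiniteDimensional ℝ E] [MeasureSpace E] [BorelSpace E] [(volume : Measure E).IsAddHaarMeasure]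
    [NormedAddCommGroup F] [NormedSpace ℝ F] {κ : E → ℝ} {f : E → F}
    (hκ : ∀ x y, ‖x‖ = ‖y‖ → κ x = κ y) (hf : ∀ x y, ‖x‖ = ‖y‖ → f x = f y) {x y : E}
    (h : ‖x‖ = ‖y‖) : levyOp κ f x = levyOp κ f y := by
  set L := (ℝ ∙ (x - y))ᗮ.reflection
  have hLx : L x = y := Submodule.reflection_sub h
  rw [← hLx, levyOp, levyOp, ← (measurePreserving_linearIsometryEquiv volume L).integral_comp
    L.toHomeomorph.measurableEmbedding (fun z ↦ κ z • secondDiff f (L x) z)]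
  congr 1 with z
  simp only [secondDiff, ← map_add, ← map_sub, hf _ _ (L.norm_map _), hκ _ _ (L.norm_map _)]

section MeanValueKernel

variable {E : Type*} [NormedAddCommGroup E] {s : ℝ}

/-- A smooth bump `exp (-1 / (1 - ‖x‖ ^ 2))` supported in the closed unit ball; unlike
`ContDiffBump`, it is known to decrease with `‖x‖`. -/
noncomputable def radialBump (x : E) : ℝ := expNegInvGlue (1 - ‖x‖ ^ 2)

theorem radialBump_nonneg (x : E) : 0 ≤ radialBump x := expNegInvGlue.nonneg _

theorem radialBump_zero_pos : 0 < radialBump (0 : E) := expNegInvGlue.pos_of_pos (by simp)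

theorem radialBump_eq_zero {x : E} (hx : 1 ≤ ‖x‖) : radialBump x = 0 :=
  expNegInvGlue.zero_of_nonpos (sub_nonpos.2 (one_le_pow₀ hx))

theorem isRadiallyAntitone_radialBump : IsRadiallyAntitone (radialBump : E → ℝ) := fun _ _ h ↦
  expNegInvGlue.monotone (by gcongr)

theorem abs_radialBump_le (x : E) : |radialBump x| ≤ radialBump (0 : E) := by
  rw [abs_of_nonneg (radialBump_nonneg x)]
  exact isRadiallyAntitone_radialBump (by simp)

variable [InnerProductSpace ℝ E]

theorem contDiff_radialBump : ContDiff ℝ ∞ (radialBump : E → ℝ) :=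
  expNegInvGlue.contDiff.comp (contDiff_const.sub (contDiff_norm_sq ℝ))

theorem tsupport_radialBump_smul_subset {l : ℝ} (hl : 1 ≤ l) :
    tsupport (fun x : E ↦ radialBump (l • x)) ⊆ closedBall 0 1 := by
  refine closure_minimal (fun x hx ↦ ?_) isClosed_closedBall
  by_contra hx'
  rw [mem_closedBall_zero_iff, not_le] at hx'
  refine hx (radialBump_eq_zero ?_)
  rw [norm_smul, Real.norm_of_nonneg (by positivity)]
  exact one_le_mul_of_one_le_of_one_le hl hx'.le

variable [FiniteDimensional ℝ E]

theorem hasCompactSupport_radialBump_smul {l : ℝ} (hl : 1 ≤ l) :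
    HasCompactSupport fun x : E ↦ radialBump (l • x) :=
  (isCompact_closedBall 0 1).of_isClosed_subset (isClosed_tsupport _)
    (tsupport_radialBump_smul_subset hl)

theorem hasCompactSupport_radialBump : HasCompactSupport (radialBump : E → ℝ) := by
  simpa only [one_smul] using hasCompactSupport_radialBump_smul (E := E) le_rfl

variable [MeasureSpace E] [BorelSpace E] [(volume : Measure E).IsAddHaarMeasure]

/-- The kernel of the mean value formula for `s`-harmonic functions, up to normalisation: the radial
average of the fractional Laplacian of `radialBump`. -/
noncomputable def meanValueKernel (s : ℝ) : E → ℝ :=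
  radialAverage (finrank ℝ E - 1) (levyOp (fracKernel s) radialBump)

theorem levyOp_fracKernel_radialBump_eq_of_norm_eq (x y : E) (h : ‖x‖ = ‖y‖) :
    levyOp (fracKernel s) radialBump x = levyOp (fracKernel s) radialBump y :=
  levyOp_eq_of_norm_eq (fun z w hzw ↦ by rw [fracKernel, hzw, fracKernel])
    (fun _ _ ↦ isRadiallyAntitone_radialBump.eq_of_norm_eq) h

theorem meanValueKernel_neg (x : E) : meanValueKernel s (-x) = meanValueKernel s x := by
  unfold meanValueKernel radialAverage
  congr 1 with t
  rw [levyOp_fracKernel_radialBump_eq_of_norm_eq (t • -x) (t • x) (by rw [smul_neg, norm_neg])]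

variable [Nontrivial E]

theorem hasSmoothDecay_levyOp_fracKernel_radialBump (hs : s ∈ Ioo (0 : ℝ) 1) :
    HasSmoothDecay (finrank ℝ E + 2 * s) (levyOp (fracKernel s) (radialBump : E → ℝ)) :=
  hasSmoothDecay_levyOp_fracKernel hs contDiff_radialBump hasCompactSupport_radialBump

theorem integrable_levyOp_fracKernel_radialBump (hs : s ∈ Ioo (0 : ℝ) 1) :
    Integrable (levyOp (fracKernel s) (radialBump : E → ℝ)) :=
  (isLevyKernel_fracKernel hs).integrable_levyOp (contDiff_infty.1 contDiff_radialBump 2)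
    hasCompactSupport_radialBump

theorem hasSmoothDecay_meanValueKernel (hs : s ∈ Ioo (0 : ℝ) 1) :
    HasSmoothDecay (finrank ℝ E + s) (meanValueKernel s : E → ℝ) :=
  (hasSmoothDecay_levyOp_fracKernel_radialBump hs).radialAverage_of_integral_eq_zero
    (by linarith [hs.1]) levyOp_fracKernel_radialBump_eq_of_norm_eq
    ((isLevyKernel_fracKernel hs).integral_levyOp_eq_zero (contDiff_infty.1 contDiff_radialBump 2)
      hasCompactSupport_radialBump)
    (by linarith [hs.1, Nat.cast_nonneg (α := ℝ) (finrank ℝ E)]) (by linarith [hs.1])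
    (by linarith [hs.2])

theorem integrable_meanValueKernel (hs : s ∈ Ioo (0 : ℝ) 1) :
    Integrable (meanValueKernel s : E → ℝ) :=
  (hasSmoothDecay_meanValueKernel hs).integrable (by linarith [hs.1])

theorem dilationMean_radialBump_levyOp_pos (hs : s ∈ Ioo (0 : ℝ) 1) {l : ℝ} (hl : 0 < l) :
    0 < dilationMean radialBump (levyOp (fracKernel s) (radialBump : E → ℝ)) l := by
  obtain ⟨z₀, hz₀⟩ := NormedSpace.exists_lt_norm ℝ E (max 1 l)
  have hz₁ := radialBump_eq_zero ((le_max_left _ _).trans hz₀.le)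
  have hzl : radialBump (l⁻¹ • z₀) = 0 := radialBump_eq_zero <| by
    rw [norm_smul, norm_inv, Real.norm_of_nonneg hl.le, inv_mul_eq_div, one_le_div hl]
    exact (le_max_right _ _).trans hz₀.le
  rw [dilationMean_eq_integral hl]
  refine isRadiallyAntitone_radialBump.integral_mul_levyOp_pos
    (isRadiallyAntitone_radialBump.comp_smul l⁻¹) (isLevyKernel_fracKernel hs)
    (fun _ ↦ fracKernel_pos) (contDiff_infty.1 contDiff_radialBump 2) hasCompactSupport_radialBump
    (contDiff_radialBump.continuous.comp (continuous_const_smul _)) (fun x ↦ abs_radialBump_le _)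
    (z₀ := z₀) ?_ ?_
  · rw [hz₁]
    exact radialBump_zero_pos
  · rw [hzl, smul_zero]
    exact radialBump_zero_pos

theorem dilationMean_meanValueKernel_sub (hs : s ∈ Ioo (0 : ℝ) 1) {v : E → ℝ} {M l₁ l₂ : ℝ}
    (hv : AEStronglyMeasurable v) (hM : ∀ x, |v x| ≤ M) (hl₁ : 0 < l₁) (hl : l₁ ≤ l₂) :
    dilationMean v (meanValueKernel s) l₂ - dilationMean v (meanValueKernel s) l₁ =
      ∫ l in l₁..l₂, l⁻¹ * dilationMean v (levyOp (fracKernel s) radialBump) l :=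
  dilationMean_radialAverage_sub
    (hasSmoothDecay_levyOp_fracKernel_radialBump hs).contDiff.continuous
    (integrable_levyOp_fracKernel_radialBump hs) (integrable_meanValueKernel hs) hv hM hl₁ hl

theorem strictMonoOn_dilationMean_radialBump (hs : s ∈ Ioo (0 : ℝ) 1) :
    StrictMonoOn (dilationMean (radialBump : E → ℝ) (meanValueKernel s)) (Ioi 0) := by
  intro l₁ hl₁ l₂ _ hl
  have hbump : AEStronglyMeasurable (radialBump : E → ℝ) :=
    contDiff_radialBump.continuous.aestronglyMeasurable
  rw [← sub_pos, dilationMean_meanValueKernel_sub hs hbump abs_radialBump_le hl₁ hl.le]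
  refine intervalIntegral.intervalIntegral_pos_of_pos_on
    (intervalIntegrable_inv_mul_dilationMean
      (hasSmoothDecay_levyOp_fracKernel_radialBump hs).contDiff.continuous
      (integrable_levyOp_fracKernel_radialBump hs) hbump abs_radialBump_le hl₁ hl.le)
    (fun l hl ↦ ?_) hl
  have hl₀ := lt_trans hl₁ hl.1
  exact mul_pos (inv_pos.2 hl₀) (dilationMean_radialBump_levyOp_pos hs hl₀)

theorem integral_meanValueKernel_pos (hs : s ∈ Ioo (0 : ℝ) 1) :
    0 < ∫ x : E, meanValueKernel s x := by
  have hmono {l₁ l₂ : ℝ} (h₁ : 0 < l₁) (h : l₁ < l₂) :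
      dilationMean (radialBump : E → ℝ) (meanValueKernel s) l₁ <
        dilationMean (radialBump : E → ℝ) (meanValueKernel s) l₂ :=
    strictMonoOn_dilationMean_radialBump hs h₁ (h₁.trans h) h
  obtain ⟨B, hB⟩ := (hasSmoothDecay_meanValueKernel (E := E) hs).hasDecay.exists_norm_le
    (by linarith [hs.1, Nat.cast_nonneg (α := ℝ) (finrank ℝ E)])
  have hbot := tendsto_dilationMean_nhds_zero
    (contDiff_radialBump.continuous.integrable_of_hasCompactSupport hasCompactSupport_radialBump) hB
  have htop := tendsto_dilationMean_atTop contDiff_radialBump.continuous abs_radialBump_le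
    (integrable_meanValueKernel (E := E) hs)
  refine (mul_pos_iff_of_pos_left (radialBump_zero_pos (E := E))).1 ?_
  calc 0 ≤ dilationMean (radialBump : E → ℝ) (meanValueKernel s) 1 := by
        refine le_of_tendsto (hbot.mono_left (nhdsWithin_le_nhds (s := Ioi 0))) ?_
        filter_upwards [self_mem_nhdsWithin, mem_nhdsWithin_of_mem_nhds (Iio_mem_nhds one_pos)]
          with l hl hl₁ using (hmono hl hl₁).le
    _ < dilationMean (radialBump : E → ℝ) (meanValueKernel s) 2 :=
        hmono one_pos one_lt_two
    _ ≤ radialBump (0 : E) * ∫ x : E, meanValueKernel s x := by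
        refine ge_of_tendsto htop ?_
        filter_upwards [eventually_gt_atTop 2] with l hl
        exact (hmono two_pos hl).le

end MeanValueKernel

section Representation

open ContinuousLinearMap (lsmul)
open scoped Convolution

variable {E : Type*} [NormedAddCommGroup E] [InnerProductSpace ℝ E] [FiniteDimensional ℝ E]
  [MeasureSpace E] [BorelSpace E] [(volume : Measure E).IsAddHaarMeasure] {s c M : ℝ} {u v : E → ℝ}
  {U : Set E} {x : E}

/-- The average of `u` around `x` at scale `c` against the profile `meanValueKernel s`, normalised
so that constants are preserved. -/
noncomputable def meanValueAverage (s c : ℝ) (u : E → ℝ) (x : E) : ℝ :=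
  (∫ y : E, meanValueKernel s y)⁻¹ •
    ((fun y ↦ u (c • y)) ⋆[lsmul ℝ ℝ, volume] meanValueKernel s) (c⁻¹ • x)

theorem meanValueAverage_eq_integral (hc : c ≠ 0) :
    meanValueAverage s c u x =
      (∫ y : E, meanValueKernel s y)⁻¹ * ∫ y, u (x + c • y) * meanValueKernel s y := by
  rw [meanValueAverage, convolution_def,
    ← integral_add_left_eq_self (fun t ↦ lsmul ℝ ℝ (u (c • t)) _) (c⁻¹ • x)]
  simp only [sub_add_cancel_left, meanValueKernel_neg, smul_add, smul_inv_smul₀ hc,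
    ContinuousLinearMap.lsmul_apply, smul_eq_mul]

variable [Nontrivial E]

theorem contDiff_meanValueAverage (hs : s ∈ Ioo (0 : ℝ) 1) (c : ℝ) (hu : Continuous u)
    (hM : ∀ x, |u x| ≤ M) : ContDiff ℝ ∞ (meanValueAverage s c u) := by
  have hconv := (hasSmoothDecay_meanValueKernel hs).contDiff_convolution (μ := volume)
    (by linarith [hs.1]) (hu.comp (continuous_const_smul c)).aestronglyMeasurable fun y ↦ hM (c • y)
  exact (hconv.comp (contDiff_const_smul c⁻¹)).const_smul (∫ y : E, meanValueKernel s y)⁻¹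

theorem norm_iteratedFDeriv_meanValueAverage_le (hs : s ∈ Ioo (0 : ℝ) 1) (hc : 0 < c)
    (hu : Continuous u) (hM : ∀ x, |u x| ≤ M) (k : ℕ) (x : E) :
    ‖iteratedFDeriv ℝ k (meanValueAverage s c u) x‖ ≤
      (∫ y : E, meanValueKernel s y)⁻¹ * (∫ y : E, ‖iteratedFDeriv ℝ k (meanValueKernel s) y‖) *
        c⁻¹ ^ k * M := by
  have hα : (finrank ℝ E : ℝ) < finrank ℝ E + s := by linarith [hs.1]
  have huc : AEStronglyMeasurable (fun y ↦ u (c • y)) :=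
    (hu.comp (continuous_const_smul c)).aestronglyMeasurable
  have hconv := (hasSmoothDecay_meanValueKernel hs).contDiff_convolution hα huc fun y ↦ hM (c • y)
  have hle := (hasSmoothDecay_meanValueKernel hs).norm_iteratedFDeriv_convolution_le hα huc
    (fun y ↦ hM (c • y)) k (c⁻¹ • x)
  have hk : ContDiff ℝ k ((fun y ↦ u (c • y)) ⋆[lsmul ℝ ℝ, volume] meanValueKernel s) :=
    contDiff_infty.1 hconv k
  have hkc : ContDiffAt ℝ k
      (fun x ↦ ((fun y ↦ u (c • y)) ⋆[lsmul ℝ ℝ, volume] meanValueKernel s) (c⁻¹ • x)) x :=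
    (hk.comp (contDiff_const_smul _)).contDiffAt
  unfold meanValueAverage
  rw [iteratedFDeriv_const_smul_apply' hkc, iteratedFDeriv_comp_const_smul _ hk, norm_smul,
    norm_smul, norm_pow, Real.norm_of_nonneg (inv_pos.2 (integral_meanValueKernel_pos hs)).le,
    Real.norm_of_nonneg (inv_pos.2 hc).le, mul_assoc, mul_assoc]
  refine mul_le_mul_of_nonneg_left ?_ (inv_pos.2 (integral_meanValueKernel_pos hs)).le
  calc c⁻¹ ^ k * ‖_‖ ≤ c⁻¹ ^ k * (M * ∫ y : E, ‖iteratedFDeriv ℝ k (meanValueKernel s) y‖) := by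
        gcongr
    _ = _ := by ring

theorem dilationMean_levyOp_radialBump_eq_zero (hs : s ∈ Ioo (0 : ℝ) 1) (hv : Continuous v)
    (hM : ∀ x, |v x| ≤ M) (hU : IsOpen U) (hUc : closedBall 0 1 ⊆ U)
    (hh : ∀ x ∈ U, IsNonlocalHarmonicAt (fracKernel s) v x) {l : ℝ} (hl : 1 ≤ l) :
    dilationMean v (levyOp (fracKernel s) radialBump) l = 0 := by
  have hl₀ : 0 < l := one_pos.trans_le hl
  have hweak := (isLevyKernel_fracKernel hs).integral_mul_levyOp_eq_zero_of_isNonlocalHarmonicAt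
    ((contDiff_infty.1 contDiff_radialBump 2).comp (contDiff_const_smul l))
    (hasCompactSupport_radialBump_smul hl) (fun x ↦ radialBump_nonneg (l • x)) hv hM hU
    ((tsupport_radialBump_smul_subset hl).trans hUc) hh
  simp only [Function.comp_def, levyOp_fracKernel_comp_smul hl₀, mul_left_comm (v _)] at hweak
  rw [integral_const_mul] at hweak
  rw [dilationMean, (mul_eq_zero_iff_left (Real.rpow_pos_of_pos hl₀ _).ne').1 hweak, mul_zero]

theorem mul_integral_meanValueKernel_eq (hs : s ∈ Ioo (0 : ℝ) 1) (hv : Continuous v)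
    (hM : ∀ x, |v x| ≤ M) (hU : IsOpen U) (hUc : closedBall 0 1 ⊆ U)
    (hh : ∀ x ∈ U, IsNonlocalHarmonicAt (fracKernel s) v x) :
    v 0 * ∫ y : E, meanValueKernel s y = ∫ y, v y * meanValueKernel s y := by
  have hconst (l : ℝ) (hl : 1 ≤ l) :
      dilationMean v (meanValueKernel s) l = dilationMean v (meanValueKernel s) 1 := by
    rw [← sub_eq_zero, dilationMean_meanValueKernel_sub hs hv.aestronglyMeasurable hM one_pos hl]
    refine (intervalIntegral.integral_congr fun t ht ↦ ?_).trans intervalIntegral.integral_zero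
    rw [uIcc_of_le hl] at ht
    simp only [dilationMean_levyOp_radialBump_eq_zero hs hv hM hU hUc hh ht.1, mul_zero]
  have hlim : Tendsto (dilationMean v (meanValueKernel s)) atTop
      (𝓝 (dilationMean v (meanValueKernel s) 1)) :=
    tendsto_const_nhds.congr' ((eventually_ge_atTop 1).mono fun l hl ↦ (hconst l hl).symm)
  rw [tendsto_nhds_unique (tendsto_dilationMean_atTop hv hM (integrable_meanValueKernel hs)) hlim]
  simp only [dilationMean, one_pow, one_mul, one_smul]

theorem meanValueAverage_eq_self (hs : s ∈ Ioo (0 : ℝ) 1) (hc : 0 < c) (hu : Continuous u)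
    (hM : ∀ x, |u x| ≤ M) (hU : IsOpen U) (hUc : closedBall x c ⊆ U)
    (hh : ∀ y ∈ U, IsNonlocalHarmonicAt (fracKernel s) u y) : meanValueAverage s c u x = u x := by
  have hmean := mul_integral_meanValueKernel_eq (v := fun y ↦ u (x + c • y))
    (U := (fun y ↦ x + c • y) ⁻¹' U) hs (by fun_prop) (fun y ↦ hM _) (hU.preimage (by fun_prop))
    (fun y hy ↦ hUc ?_) fun y hy ↦
      IsNonlocalHarmonicAt.comp_smul (u := fun y ↦ u (x + y)) hc (hh _ hy).comp_const_add
  · rw [meanValueAverage_eq_integral hc.ne', ← hmean, smul_zero, add_zero, mul_comm,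
      mul_inv_cancel_right₀ (integral_meanValueKernel_pos hs).ne']
  · rw [mem_closedBall_iff_norm, add_sub_cancel_left, norm_smul, Real.norm_of_nonneg hc.le]
    exact mul_le_of_le_one_right hc.le (mem_closedBall_zero_iff.1 hy)

theorem sHarmonic_interior_smoothness_general (hs : s ∈ Ioo (0 : ℝ) 1) (k : ℕ) :
    ∃ C : ℝ, 0 < C ∧ ∀ (x₀ : E) (r : ℝ), 0 < r → ∀ u : E → ℝ, (∃ M, ∀ x, |u x| ≤ M) →
      Continuous u → (∀ x ∈ ball x₀ r, IsNonlocalHarmonicAt (fracKernel s) u x) →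
      ContDiffOn ℝ ∞ u (ball x₀ (r / 2)) ∧
      ∀ M : ℝ, (∀ y ∉ ball x₀ r, |u y| ≤ M) → ∀ x ∈ ball x₀ (r / 2),
        ‖iteratedFDeriv ℝ k u x‖ ≤ C * r ^ (-k : ℝ) * M := by
  let K : ℝ := (∫ y : E, meanValueKernel s y)⁻¹ *
    ∫ y : E, ‖iteratedFDeriv ℝ k (meanValueKernel s) y‖
  have hK₀ : 0 ≤ K := mul_nonneg (inv_pos.2 (integral_meanValueKernel_pos hs)).le
    (integral_nonneg fun _ ↦ norm_nonneg _)
  refine ⟨(K + 1) * 2 ^ k, by positivity, fun x₀ r hr u ⟨M₀, hM₀⟩ hu hh ↦ ?_⟩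
  have heq : EqOn u (meanValueAverage s (r / 2) u) (ball x₀ (r / 2)) := fun x hx ↦
    (meanValueAverage_eq_self hs (half_pos hr) hu hM₀ isOpen_ball
      (closedBall_subset_ball' (by linarith [mem_ball.1 hx])) hh).symm
  refine ⟨(contDiff_meanValueAverage hs _ hu hM₀).contDiffOn.congr heq, fun M hM x hx ↦ ?_⟩
  have hMu := (isLevyKernel_fracKernel hs).abs_le_of_isNonlocalHarmonicAt
    (fun _ ↦ fracKernel_pos) hu hM₀ isBounded_ball hh hM
  have hM_nonneg : 0 ≤ M := (abs_nonneg _).trans (hMu x)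
  rw [((heq.eventuallyEq_of_mem (isOpen_ball.mem_nhds hx)).iteratedFDeriv ℝ k).eq_of_nhds]
  calc _ ≤ K * (r / 2)⁻¹ ^ k * M :=
        norm_iteratedFDeriv_meanValueAverage_le hs (half_pos hr) hu hMu k x
    _ ≤ (K + 1) * (r / 2)⁻¹ ^ k * M := by gcongr; linarith
    _ = (K + 1) * 2 ^ k * r ^ (-k : ℝ) * M := by
        rw [Real.rpow_neg hr.le, Real.rpow_natCast, inv_div, div_pow, div_eq_mul_inv,
          mul_assoc _ (2 ^ k)]

end Representation

theorem isNonlocalHarmonicAt_fracKernel_iff {E : Type*} [NormedAddCommGroup E] [NormedSpace ℝ E]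
    [MeasureSpace E] [BorelSpace E] [(volume : Measure E).IsAddLeftInvariant] {s : ℝ} {u : E → ℝ}
    {x : E} :
    IsNonlocalHarmonicAt (fracKernel s) u x ↔
      Tendsto (fun ε ↦ ∫ y in {y | ε < ‖y - x‖}, (u x - u y) / ‖x - y‖ ^ (finrank ℝ E + 2 * s))
        (𝓝[>] 0) (𝓝 0) := by
  refine tendsto_congr fun ε ↦ ?_
  have hmeas : MeasurableSet {y | ε < ‖y - x‖} :=
    (isOpen_lt continuous_const (by fun_prop)).measurableSet
  rw [← integral_indicator hmeas, ← integral_add_left_eq_self (indicator _ _) x]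
  refine integral_congr_ae (.of_forall fun z ↦ ?_)
  by_cases hz : ε < ‖z‖ <;>
    simp [truncKernel, fracKernel, hz, Real.rpow_neg, div_eq_inv_mul, -neg_add_rev]

section MultiDeriv

variable {n : ℕ} {f : EuclideanSpace ℝ (Fin n) → ℝ} {x : EuclideanSpace ℝ (Fin n)}

theorem contDiffAt_partialDeriv (hf : ContDiffAt ℝ ∞ f x) (i : Fin n) :
    ContDiffAt ℝ ∞ (partialDeriv n i f) x :=
  (hf.fderiv_right (m := ∞) (by simp)).clm_apply contDiffAt_const

theorem norm_iteratedFDeriv_partialDeriv_le (hf : ContDiffAt ℝ ∞ f x) (i : Fin n) (j : ℕ) :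
    ‖iteratedFDeriv ℝ j (partialDeriv n i f) x‖ ≤ ‖iteratedFDeriv ℝ (j + 1) f x‖ := by
  set L := ContinuousLinearMap.apply ℝ ℝ (EuclideanSpace.single i (1 : ℝ))
  have hL : ‖L‖ ≤ 1 := ContinuousLinearMap.opNorm_le_bound _ zero_le_one fun g ↦ by
    simpa [L, mul_comm] using g.le_opNorm (EuclideanSpace.single i (1 : ℝ))
  calc ‖iteratedFDeriv ℝ j (L ∘ fderiv ℝ f) x‖
      ≤ ‖L‖ * ‖iteratedFDeriv ℝ j (fderiv ℝ f) x‖ :=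
        L.norm_iteratedFDeriv_comp_left (hf.fderiv_right (m := ∞) (by simp))
          (by exact_mod_cast le_top)
    _ ≤ ‖iteratedFDeriv ℝ j (fderiv ℝ f) x‖ := mul_le_of_le_one_left (norm_nonneg _) hL
    _ = ‖iteratedFDeriv ℝ (j + 1) f x‖ := norm_iteratedFDeriv_fderiv

theorem contDiffAt_iterate_partialDeriv (hf : ContDiffAt ℝ ∞ f x) (i : Fin n) (k : ℕ) :
    ContDiffAt ℝ ∞ ((partialDeriv n i)^[k] f) x := by
  induction k with
  | zero => exact hf
  | succ k ih =>
    rw [Function.iterate_succ_apply']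
    exact contDiffAt_partialDeriv ih i

theorem norm_iteratedFDeriv_iterate_partialDeriv_le (hf : ContDiffAt ℝ ∞ f x) (i : Fin n)
    (j k : ℕ) :
    ‖iteratedFDeriv ℝ j ((partialDeriv n i)^[k] f) x‖ ≤ ‖iteratedFDeriv ℝ (j + k) f x‖ := by
  induction k generalizing j with
  | zero => rfl
  | succ k ih =>
    rw [Function.iterate_succ_apply', ← add_assoc, add_right_comm]
    exact (norm_iteratedFDeriv_partialDeriv_le (contDiffAt_iterate_partialDeriv hf i k) i j).trans
      (ih (j + 1))

theorem abs_multiDeriv_le (hf : ContDiffAt ℝ ∞ f x) (β : Fin n → ℕ) :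
    |multiDeriv n β f x| ≤ ‖iteratedFDeriv ℝ (∑ i, β i) f x‖ := by
  have hfold (l : List (Fin n)) :
      ContDiffAt ℝ ∞ ((l.map fun i ↦ (partialDeriv n i)^[β i]).foldr (· ∘ ·) id f) x ∧
      ∀ j, ‖iteratedFDeriv ℝ j ((l.map fun i ↦ (partialDeriv n i)^[β i]).foldr (· ∘ ·) id f) x‖ ≤
        ‖iteratedFDeriv ℝ (j + (l.map β).sum) f x‖ := by
    induction l with
    | nil => exact ⟨hf, fun _ ↦ le_rfl⟩
    | cons i l ih =>
      refine ⟨contDiffAt_iterate_partialDeriv ih.1 i _, fun j ↦ ?_⟩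
      rw [List.map_cons (f := β), List.sum_cons, ← add_assoc]
      exact (norm_iteratedFDeriv_iterate_partialDeriv_le ih.1 i j _).trans (ih.2 _)
  have hβ := (hfold (List.finRange n)).2 0
  rwa [norm_iteratedFDeriv_zero, ← List.ofFn_eq_map, ← List.ofFn_eq_map, List.sum_ofFn,
    zero_add] at hβ

end MultiDeriv

/-- Interior smoothness and derivative estimates for `s`-harmonic
functions.  For every multi-index `β` there is `C > 0` depending only on
`n, s, β` such that every bounded continuous `u` which is `s`-harmonic at every
point of `B_r` is `C^∞` on `B_{r/2}` and satisfies
`sup_{B_{r/2}} |D^β u| ≤ C r^{−|β|} sup_{ℝⁿ ∖ B_r} |u|`. -/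
theorem sHarmonic_interior_smoothness
    (n : ℕ) (hn : 1 ≤ n) (s : ℝ) (hs : s ∈ Set.Ioo (0:ℝ) 1) (β : Fin n → ℕ) :
    ∃ C : ℝ, 0 < C ∧
      ∀ (r : ℝ), 0 < r →
        ∀ u : EuclideanSpace ℝ (Fin n) → ℝ,
          (∃ M : ℝ, ∀ x, |u x| ≤ M) → Continuous u →
          (∀ x ∈ Metric.ball (0 : EuclideanSpace ℝ (Fin n)) r,
            Filter.Tendsto
              (fun ε : ℝ => ∫ y in {y : EuclideanSpace ℝ (Fin n) | ε < ‖y - x‖},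
                (u x - u y) / ‖x - y‖ ^ ((n : ℝ) + 2 * s))
              (𝓝[>] (0:ℝ)) (𝓝 0)) →
          ContDiffOn ℝ (⊤ : ℕ∞) u (Metric.ball (0 : EuclideanSpace ℝ (Fin n)) (r / 2)) ∧
          ∀ M : ℝ, (∀ y ∉ Metric.ball (0 : EuclideanSpace ℝ (Fin n)) r, |u y| ≤ M) →
            ∀ x ∈ Metric.ball (0 : EuclideanSpace ℝ (Fin n)) (r / 2),
              |multiDeriv n β u x| ≤ C * r ^ (-((∑ i, β i : ℕ) : ℝ)) * M := by
  have : Nonempty (Fin n) := Fin.pos_iff_nonempty.1 hn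
  obtain ⟨C, hC, hest⟩ := sHarmonic_interior_smoothness_general
    (E := EuclideanSpace ℝ (Fin n)) hs (∑ i, β i)
  refine ⟨C, hC, fun r hr u hb hu hh ↦ ?_⟩
  obtain ⟨hsmooth, hbound⟩ := hest 0 r hr u hb hu fun x hx ↦
    isNonlocalHarmonicAt_fracKernel_iff.2 (by simpa only [finrank_euclideanSpace_fin] using hh x hx)
  exact ⟨hsmooth, fun M hM x hx ↦
    (abs_multiDeriv_le (hsmooth.contDiffAt (isOpen_ball.mem_nhds hx)) β).trans (hbound M hM x hx)⟩
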